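/- arXiv:1309.0264 — 3 statements merged into one kernel-verified Lean document; each statement's English description precedes it below -/
import Mathlib

section
/- Let β ∈ (π, 2π] and let S_β = {(r cos θ, r sin θ) : r > 0, 0 < θ < β} be the infinite open sector of angle β. Then the Hardy constant of S_β, i.e. the largest constant c such that ∫_{S_β} |∇u|² dx ≥ c ∫_{S_β} u(x)²/dist(x, ∂S_β)² dx for all u ∈ C_c^∞(S_β), equals c_β. -/
open Real MeasureTheory Set

noncomputable abbrev E2 := EuclideanSpace ℝ (Fin 2)

/-- `c` solves the Hardy-constant equation for the angle `β`. -/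
def hardyEq (c β : ℝ) : Prop :=
  Real.sqrt c * Real.tan (Real.sqrt c * ((β - Real.pi) / 2)) =
    2 * (Real.Gamma ((3 + Real.sqrt (1 - 4 * c)) / 4) /
         Real.Gamma ((1 + Real.sqrt (1 - 4 * c)) / 4)) ^ 2

/-- `βcr` is the critical angle: the unique angle in `(π, 2π)` with
`tan((βcr − π)/4) = 4 (Γ(3/4)/Γ(1/4))²`. -/
def isBetaCr (βcr : ℝ) : Prop :=
  βcr ∈ Set.Ioo Real.pi (2 * Real.pi) ∧
    Real.tan ((βcr - Real.pi) / 4) = 4 * (Real.Gamma (3 / 4) / Real.Gamma (1 / 4)) ^ 2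

/-- `c = c_β`: for `β ≤ βcr`, `c = 1/4`; for `β > βcr`, `c` is the unique solution in
`(0, 1/4]` of the Hardy-constant equation for `β`. -/
def isHardyConst (βcr β c : ℝ) : Prop :=
  (β ≤ βcr ∧ c = 1 / 4) ∨ (βcr < β ∧ c ∈ Set.Ioc (0 : ℝ) (1 / 4) ∧ hardyEq c β)

/-- The infinite open sector of angle `β` with vertex at the origin. -/
def sector (β : ℝ) : Set E2 :=
  {p | ∃ r θ : ℝ, 0 < r ∧ 0 < θ ∧ θ < β ∧
    p 0 = r * Real.cos θ ∧ p 1 = r * Real.sin θ}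

/-!
In polar coordinates the distance to the boundary is `r` times a function of the angle alone, so
the Hardy inequality on the sector is equivalent to the one-dimensional inequality
`c ∫ φ² / w² ≤ ∫ φ'²` on `(0, β)` with weight `w = sin (min θ (β - θ) (π / 2))`. Slicing the sector
by circles gives one direction. For the other, test with `χ r * φ θ`, where `χ` varies so slowly
in `log r` that `∫ r χ'²` is negligible against `∫ χ² / r`.

By reflection the angular problem lives on `(0, β / 2)`. There Jacobi's substitution `φ = η G`
with `G'' = -c G / w²` turns `∫ φ'² - c ∫ φ² / w²` into `∫ η'² G²` plus a boundary term. On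
`(0, π / 2]` the solution vanishing at `0` is `sin θ ^ a ∫₀^∞ (cos θ + cosh u) ^ (-a) du` with
`a (1 - a) = c`, whose logarithmic derivative at `π / 2` is a quotient of Gamma values; beyond
`π / 2` it is a cosine, and the Hardy-constant equation for `γ` says exactly that it can be glued
to a solution with zero derivative at `γ / 2`. This solution is positive and increasing, which
proves the inequality for `β ≤ γ`, and cutting it off near `0` proves optimality for `β = γ`. The
bound `c ≤ 1 / 4` is the one-dimensional Hardy inequality near an endpoint, where the same
substitution is made with `G = √θ`.
-/

namespace HardySector

open Filter Topology
open scoped ContDiff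

section CoshIntegral

/-- The integral `∫₀^∞ (x + cosh u)^(-b) du`, a Legendre function in disguise; the angular Hardy
ground state near the boundary is built from it. It is meant for `-1 < x` and `0 < b`. -/
noncomputable def coshIntegral (b x : ℝ) : ℝ := ∫ u in Ioi (0 : ℝ), (x + cosh u) ^ (-b)

lemma exp_div_two_le_cosh (u : ℝ) : exp u / 2 ≤ cosh u := by
  rw [cosh_eq]
  linarith [exp_pos (-u)]

lemma sinh_le_exp_div_two (u : ℝ) : sinh u ≤ exp u / 2 := by
  rw [sinh_eq]
  linarith [exp_pos (-u)]

variable {a b x x₀ : ℝ}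

lemma min_one_mul_exp_le_add_cosh (hx₀ : -1 < x₀) (hx : x₀ ≤ x) (u : ℝ) :
    min 1 (1 + x₀) / 2 * exp u ≤ x + cosh u := by
  have hcosh := one_le_cosh u
  have hmin : 0 < min 1 (1 + x₀) := lt_min one_pos (by linarith)
  calc min 1 (1 + x₀) / 2 * exp u = min 1 (1 + x₀) * (exp u / 2) := by ring
    _ ≤ min 1 (1 + x₀) * cosh u := by gcongr; exact exp_div_two_le_cosh u
    _ ≤ x₀ + cosh u := by
      rcases le_total 0 x₀ with h | h
      · rw [min_eq_left (by linarith)]; linarith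
      · rw [min_eq_right (by linarith)]; nlinarith
    _ ≤ x + cosh u := by gcongr

lemma add_cosh_pos (hx : -1 < x) (u : ℝ) : 0 < x + cosh u := by
  linarith [one_le_cosh u]

lemma add_cosh_rpow_neg_le (hb : 0 < b) (hx₀ : -1 < x₀) (hx : x₀ ≤ x) (u : ℝ) :
    (x + cosh u) ^ (-b) ≤ (min 1 (1 + x₀) / 2) ^ (-b) * exp (-b * u) := by
  have hmin : 0 < min 1 (1 + x₀) / 2 := half_pos (lt_min one_pos (by linarith))
  calc (x + cosh u) ^ (-b) ≤ (min 1 (1 + x₀) / 2 * exp u) ^ (-b) :=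
        rpow_le_rpow_of_nonpos (by positivity) (min_one_mul_exp_le_add_cosh hx₀ hx u)
          (by linarith)
    _ = (min 1 (1 + x₀) / 2) ^ (-b) * exp (-b * u) := by
        rw [mul_rpow hmin.le (exp_pos u).le, ← exp_mul, mul_comm u]

lemma continuous_add_cosh_rpow (hx : -1 < x) (p : ℝ) : Continuous fun u => (x + cosh u) ^ p :=
  (continuous_const.add continuous_cosh).rpow_const fun u => Or.inl (add_cosh_pos hx u).ne'

lemma integrableOn_add_cosh_rpow_neg (hb : 0 < b) (hx : -1 < x) :
    IntegrableOn (fun u => (x + cosh u) ^ (-b)) (Ioi 0) := by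
  refine ((exp_neg_integrableOn_Ioi 0 hb).const_mul ((min 1 (1 + x) / 2) ^ (-b))).mono'
    (continuous_add_cosh_rpow hx _).aestronglyMeasurable (.of_forall fun u => ?_)
  rw [norm_of_nonneg (rpow_nonneg (add_cosh_pos hx u).le _)]
  exact add_cosh_rpow_neg_le hb hx le_rfl u

lemma hasDerivAt_coshIntegral (hb : 0 < b) (hx : -1 < x) :
    HasDerivAt (coshIntegral b) (-b * coshIntegral (b + 1) x) x := by
  obtain ⟨x₀, hx₀, hx₀x⟩ := exists_between hx
  have key := (hasDerivAt_integral_of_dominated_loc_of_deriv_le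
    (μ := volume.restrict (Ioi (0 : ℝ))) (F := fun x u => (x + cosh u) ^ (-b))
    (F' := fun x u => -b * (x + cosh u) ^ (-(b + 1)))
    (bound := fun u => b * ((min 1 (1 + x₀) / 2) ^ (-(b + 1)) * exp (-(b + 1) * u)))
    (Ioi_mem_nhds hx₀x) ?meas (integrableOn_add_cosh_rpow_neg hb hx)
    ((continuous_add_cosh_rpow hx _).const_mul _).aestronglyMeasurable ?bound
    (((exp_neg_integrableOn_Ioi 0 (by linarith)).const_mul _).const_mul b) ?deriv).2
  case meas =>
    filter_upwards [Ioi_mem_nhds hx] with y hy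
    exact (continuous_add_cosh_rpow hy _).aestronglyMeasurable
  case bound =>
    refine .of_forall fun u y (hy : x₀ < y) => ?_
    rw [norm_mul, norm_neg, norm_of_nonneg hb.le,
      norm_of_nonneg (rpow_nonneg (add_cosh_pos (hx₀.trans hy) u).le _)]
    gcongr
    exact add_cosh_rpow_neg_le (by linarith) hx₀ hy.le u
  case deriv =>
    refine .of_forall fun u y (hy : x₀ < y) => ?_
    refine (((hasDerivAt_id' y).add_const (cosh u)).rpow_const
      (Or.inl (add_cosh_pos (hx₀.trans hy) u).ne')).congr_deriv ?_
    rw [one_mul, neg_add']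
  rwa [integral_const_mul] at key

lemma coshIntegral_pos (hb : 0 < b) (hx : -1 < x) : 0 < coshIntegral b x := by
  have hpos (u : ℝ) : 0 < (x + cosh u) ^ (-b) := rpow_pos_of_pos (add_cosh_pos hx u) _
  refine (setIntegral_pos_iff_support_of_nonneg_ae (.of_forall fun u => (hpos u).le)
    (integrableOn_add_cosh_rpow_neg hb hx)).2 ?_
  rw [show (Function.support fun u => (x + cosh u) ^ (-b)) = univ from
    eq_univ_of_forall fun u => (hpos u).ne']
  simp

lemma coshIntegral_antitoneOn (hb : 0 < b) : AntitoneOn (coshIntegral b) (Ioi (-1)) :=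
  fun x hx y hy hxy => integral_mono (integrableOn_add_cosh_rpow_neg hb hy)
    (integrableOn_add_cosh_rpow_neg hb hx) fun u =>
      rpow_le_rpow_of_nonpos (add_cosh_pos hx u) (by gcongr) (by linarith)

lemma hasDerivAt_sinh_mul_add_cosh_rpow (hx : -1 < x) (a u : ℝ) :
    HasDerivAt (fun u => sinh u * (x + cosh u) ^ (-(a + 1)))
      (-a * (x + cosh u) ^ (-a) + (2 * a + 1) * x * (x + cosh u) ^ (-(a + 1))
        + (a + 1) * (1 - x ^ 2) * (x + cosh u) ^ (-(a + 2))) u := by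
  have hpos := add_cosh_pos hx u
  have hpow (n : ℕ) :
      (x + cosh u) ^ (-(a + 2) + n) = (x + cosh u) ^ (-(a + 2)) * (x + cosh u) ^ n :=
    rpow_add_natCast hpos.ne' _ n
  have h₁ : (x + cosh u) ^ (-(a + 1)) = (x + cosh u) ^ (-(a + 2)) * (x + cosh u) := by
    convert hpow 1 using 2 <;> push_cast <;> ring
  have h₀ : (x + cosh u) ^ (-a) = (x + cosh u) ^ (-(a + 2)) * (x + cosh u) ^ 2 := by
    convert hpow 2 using 2; push_cast; ring
  refine ((hasDerivAt_sinh u).mul (((hasDerivAt_cosh u).const_add x).rpow_const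
    (p := -(a + 1)) (Or.inl hpos.ne'))).congr_deriv ?_
  rw [show -(a + 1) - 1 = -(a + 2) by ring, h₁, h₀]
  linear_combination ((a + 1) * (x + cosh u) ^ (-(a + 2))) * cosh_sq u

lemma tendsto_sinh_mul_add_cosh_rpow (ha : 0 < a) (hx : -1 < x) :
    Tendsto (fun u => sinh u * (x + cosh u) ^ (-(a + 1))) atTop (𝓝 0) := by
  have hexp : Tendsto (fun u : ℝ => exp (-(a * u))) atTop (𝓝 0) :=
    tendsto_exp_neg_atTop_nhds_zero.comp (tendsto_id.const_mul_atTop ha)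
  refine squeeze_zero' ?_ ?_
    (by simpa only [mul_zero] using hexp.const_mul ((min 1 (1 + x) / 2) ^ (-(a + 1)) / 2))
  · filter_upwards [eventually_ge_atTop 0] with u hu
    exact mul_nonneg (sinh_nonneg_iff.2 hu) (rpow_nonneg (add_cosh_pos hx u).le _)
  · filter_upwards with u
    calc sinh u * (x + cosh u) ^ (-(a + 1))
        ≤ exp u / 2 * ((min 1 (1 + x) / 2) ^ (-(a + 1)) * exp (-(a + 1) * u)) :=
          mul_le_mul (sinh_le_exp_div_two u) (add_cosh_rpow_neg_le (by linarith) hx le_rfl u)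
            (rpow_nonneg (add_cosh_pos hx u).le _) (by positivity)
      _ = (min 1 (1 + x) / 2) ^ (-(a + 1)) / 2 * exp (-(a * u)) := by
          rw [show -(a * u) = u + -(a + 1) * u by ring, exp_add]; ring

lemma coshIntegral_recurrence (ha : 0 < a) (hx : -1 < x) :
    (a + 1) * (1 - x ^ 2) * coshIntegral (a + 2) x =
      a * coshIntegral a x - (2 * a + 1) * x * coshIntegral (a + 1) x := by
  have hint (c : ℝ) {b : ℝ} (hb : 0 < b) :
      IntegrableOn (fun u => c * (x + cosh u) ^ (-b)) (Ioi 0) :=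
    (integrableOn_add_cosh_rpow_neg hb hx).const_mul c
  have h₀ := hint (-a) ha
  have h₁ := hint ((2 * a + 1) * x) (add_pos ha one_pos)
  have h₂ := hint ((a + 1) * (1 - x ^ 2)) (add_pos ha two_pos)
  have key := integral_Ioi_of_hasDerivAt_of_tendsto'
    (fun u _ => hasDerivAt_sinh_mul_add_cosh_rpow hx a u) ((h₀.add h₁).add h₂)
    (tendsto_sinh_mul_add_cosh_rpow ha hx)
  rw [integral_add (by exact h₀.add h₁) h₂, integral_add h₀ h₁, integral_const_mul,
    integral_const_mul, integral_const_mul, sinh_zero, zero_mul, sub_zero] at key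
  unfold coshIntegral
  linarith

lemma integral_rpow_mul_one_sub_rpow {α : ℝ} (hα : 0 < α) :
    ∫ x in Ioo (0 : ℝ) 1, x ^ (α - 1) * (1 - x) ^ (α - 1) = Gamma α ^ 2 / Gamma (2 * α) := by
  have h := ProbabilityTheory.beta_eq_betaIntegralReal α α hα hα
  rw [ProbabilityTheory.beta, ← two_mul, ← sq] at h
  rw [h, Complex.betaIntegral, intervalIntegral.integral_of_le zero_le_one,
    ← integral_Ioc_eq_integral_Ioo, ← RCLike.re_eq_complex_re, ← RCLike.ofReal_re (K := ℂ)
      (∫ x in Ioc (0 : ℝ) 1, x ^ (α - 1) * (1 - x) ^ (α - 1)), ← integral_ofReal]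
  congr 1
  refine setIntegral_congr_fun measurableSet_Ioc fun x hx => ?_
  simp only [RCLike.ofReal_mul, Complex.coe_algebraMap]
  push_cast [Complex.ofReal_cpow hx.1.le, Complex.ofReal_cpow (sub_nonneg.2 hx.2)]
  rfl

lemma integral_sigmoid_mul_one_sub_rpow {α : ℝ} (hα : 0 < α) :
    ∫ v, (sigmoid v * (1 - sigmoid v)) ^ α = Gamma α ^ 2 / Gamma (2 * α) := by
  rw [← integral_rpow_mul_one_sub_rpow hα, ← range_sigmoid, ← image_univ,
    integral_image_eq_integral_abs_deriv_smul MeasurableSet.univ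
      (fun v _ => (hasDerivAt_sigmoid v).hasDerivWithinAt) sigmoid_injective.injOn,
    setIntegral_univ]
  congr 1 with v
  have h₁ : 0 < 1 - sigmoid v := sub_pos.2 (sigmoid_lt_one v)
  have h₂ : 0 < sigmoid v * (1 - sigmoid v) := mul_pos (sigmoid_pos v) h₁
  rw [smul_eq_mul, abs_of_pos h₂, ← mul_rpow (sigmoid_pos v).le h₁.le,
    ← rpow_one_add' h₂.le (by simpa using hα.ne'), add_sub_cancel]

lemma sigmoid_mul_one_sub_sigmoid (v : ℝ) :
    sigmoid v * (1 - sigmoid v) = (2 * cosh (v / 2))⁻¹ ^ 2 := by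
  rw [← sigmoid_neg, sigmoid_def, sigmoid_def, ← mul_inv, inv_pow, neg_neg]
  have hsq : (2 * cosh (v / 2)) ^ 2 = 2 * cosh v + 2 := by
    have := cosh_two_mul (v / 2)
    rw [mul_div_cancel₀ v two_ne_zero] at this
    linarith [cosh_sq (v / 2)]
  rw [hsq, cosh_eq]
  have : exp (-v) * exp v = 1 := by rw [← exp_add, neg_add_cancel, exp_zero]
  congr 1
  linear_combination this

lemma integral_cosh_rpow_neg (ha : 0 < a) :
    ∫ u, cosh u ^ (-a) = 2 ^ (a - 1) * (Gamma (a / 2) ^ 2 / Gamma a) := by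
  have hscale := Measure.integral_comp_div (fun u => cosh u ^ (-a)) (2 : ℝ)
  have hsigmoid := integral_sigmoid_mul_one_sub_rpow (half_pos ha)
  have hcongr (v : ℝ) :
      (sigmoid v * (1 - sigmoid v)) ^ (a / 2) = 2 ^ (-a) * cosh (v / 2) ^ (-a) := by
    have hcosh := cosh_pos (v / 2)
    rw [sigmoid_mul_one_sub_sigmoid, ← rpow_natCast, ← rpow_mul (by positivity),
      Nat.cast_ofNat, mul_div_cancel₀ a two_ne_zero, inv_rpow (by positivity),
      ← rpow_neg (by positivity), mul_rpow two_pos.le hcosh.le]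
  simp_rw [hcongr] at hsigmoid
  rw [integral_const_mul, hscale, mul_div_cancel₀ a two_ne_zero, abs_two, smul_eq_mul] at hsigmoid
  rw [← hsigmoid, rpow_sub_one two_ne_zero, rpow_neg two_pos.le]
  field_simp

lemma coshIntegral_zero (ha : 0 < a) :
    coshIntegral a 0 = √π / 2 * (Gamma (a / 2) / Gamma ((a + 1) / 2)) := by
  have heven : ∫ u, cosh u ^ (-a) = 2 * coshIntegral a 0 := by
    simpa [coshIntegral] using integral_comp_abs (f := fun u => cosh u ^ (-a))
  have hdup := Gamma_mul_Gamma_add_half (a / 2)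
  rw [mul_div_cancel₀ a two_ne_zero, ← add_div, ← neg_sub, rpow_neg two_pos.le] at hdup
  rw [integral_cosh_rpow_neg ha] at heven
  have h₁ := (Gamma_pos_of_pos ha).ne'
  have h₂ := (Gamma_pos_of_pos (half_pos (add_pos ha one_pos))).ne'
  field_simp at hdup heven ⊢
  refine mul_left_cancel₀ h₁ ?_
  linear_combination (-Gamma ((a + 1) / 2)) * heven + Gamma (a / 2) * hdup

end CoshIntegral

section BoundaryProfile

/-- The positive solution of `P'' + a (1 - a) P / sin² = 0` on `(0, π)` that vanishes like `θ ^ a`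
at `0` when `1 / 2 ≤ a`; the angular ground state is a multiple of it on `(0, π / 2]`. -/
noncomputable def boundaryProfile (a θ : ℝ) : ℝ := sin θ ^ a * coshIntegral a (cos θ)

/-- The derivative of `boundaryProfile`. -/
noncomputable def boundaryProfileDeriv (a θ : ℝ) : ℝ :=
  a * (sin θ ^ (a - 1) * cos θ * coshIntegral a (cos θ) +
    sin θ ^ (a + 1) * coshIntegral (a + 1) (cos θ))

variable {a b θ : ℝ}

lemma neg_one_lt_cos_of_mem_Ioo (hθ : θ ∈ Ioo 0 π) : -1 < cos θ := by
  simpa only [cos_pi] using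
    strictAntiOn_cos (Ioo_subset_Icc_self hθ) (right_mem_Icc.2 pi_pos.le) hθ.2

lemma hasDerivAt_coshIntegral_cos (hb : 0 < b) (hθ : θ ∈ Ioo 0 π) :
    HasDerivAt (fun θ => coshIntegral b (cos θ)) (b * coshIntegral (b + 1) (cos θ) * sin θ) θ :=
  ((hasDerivAt_coshIntegral hb (neg_one_lt_cos_of_mem_Ioo hθ)).comp θ
    (hasDerivAt_cos θ)).congr_deriv (by ring)

lemma hasDerivAt_sin_rpow (p : ℝ) (hθ : θ ∈ Ioo 0 π) :
    HasDerivAt (fun θ => sin θ ^ p) (p * sin θ ^ (p - 1) * cos θ) θ :=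
  ((hasDerivAt_sin θ).rpow_const (Or.inl (sin_pos_of_mem_Ioo hθ).ne')).congr_deriv (by ring)

lemma hasDerivAt_boundaryProfile (ha : 0 < a) (hθ : θ ∈ Ioo 0 π) :
    HasDerivAt (boundaryProfile a) (boundaryProfileDeriv a θ) θ := by
  refine ((hasDerivAt_sin_rpow a hθ).mul (hasDerivAt_coshIntegral_cos ha hθ)).congr_deriv ?_
  rw [boundaryProfileDeriv, rpow_add_one (sin_pos_of_mem_Ioo hθ).ne']
  ring

lemma hasDerivAt_boundaryProfileDeriv (ha : 0 < a) (hθ : θ ∈ Ioo 0 π) :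
    HasDerivAt (boundaryProfileDeriv a) (-(a * (1 - a) / sin θ ^ 2 * boundaryProfile a θ)) θ := by
  have hsin := sin_pos_of_mem_Ioo hθ
  have hderiv := ((((hasDerivAt_sin_rpow (a - 1) hθ).mul (hasDerivAt_cos θ)).mul
    (hasDerivAt_coshIntegral_cos ha hθ)).add ((hasDerivAt_sin_rpow (a + 1) hθ).mul
      (hasDerivAt_coshIntegral_cos (add_pos ha one_pos) hθ))).const_mul a
  have hrec := coshIntegral_recurrence ha (neg_one_lt_cos_of_mem_Ioo hθ)
  have hpow (n : ℕ) : sin θ ^ (a - 2 + n) = sin θ ^ (a - 2) * sin θ ^ n :=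
    rpow_add_natCast hsin.ne' _ n
  have h₁ : sin θ ^ (a - 1) = sin θ ^ (a - 2) * sin θ := by
    convert hpow 1 using 2 <;> push_cast <;> ring
  have h₂ : sin θ ^ a = sin θ ^ (a - 2) * sin θ ^ 2 := by
    convert hpow 2 using 2; push_cast; ring
  have h₃ : sin θ ^ (a + 1) = sin θ ^ (a - 2) * sin θ ^ 3 := by
    convert hpow 3 using 2; push_cast; ring
  refine hderiv.congr_deriv ?_
  simp only [boundaryProfile, Pi.mul_apply]
  rw [show a + 1 + 1 = a + 2 by ring, show a - 1 - 1 = a - 2 by ring, add_sub_cancel_right,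
    h₁, h₂, h₃]
  rw [← sin_sq θ] at hrec
  field_simp
  linear_combination sin θ ^ 2 * hrec + (a - 1) * coshIntegral a (cos θ) * cos_sq' θ

lemma boundaryProfile_pos (ha : 0 < a) (hθ : θ ∈ Ioo 0 π) : 0 < boundaryProfile a θ :=
  mul_pos (rpow_pos_of_pos (sin_pos_of_mem_Ioo hθ) _)
    (coshIntegral_pos ha (neg_one_lt_cos_of_mem_Ioo hθ))

lemma boundaryProfileDeriv_nonneg (ha : 0 < a) (hθ : θ ∈ Ioc 0 (π / 2)) :
    0 ≤ boundaryProfileDeriv a θ := by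
  have hθ' : θ ∈ Ioo 0 π := ⟨hθ.1, by linarith [hθ.2, pi_pos]⟩
  have hcos := cos_nonneg_of_mem_Icc ⟨by linarith [hθ.1, pi_pos], hθ.2⟩
  have := sin_pos_of_mem_Ioo hθ'
  have := coshIntegral_pos ha (neg_one_lt_cos_of_mem_Ioo hθ')
  have := coshIntegral_pos (add_pos ha one_pos) (neg_one_lt_cos_of_mem_Ioo hθ')
  rw [boundaryProfileDeriv]
  positivity

lemma boundaryProfile_sq_le (ha : 1 / 2 ≤ a) (hθ : θ ∈ Ioc 0 (π / 2)) :
    boundaryProfile a θ ^ 2 ≤ coshIntegral a 0 ^ 2 * θ := by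
  have hθ' : θ ∈ Ioo 0 π := ⟨hθ.1, by linarith [hθ.2, pi_pos]⟩
  have hsin := sin_pos_of_mem_Ioo hθ'
  have hcos := cos_nonneg_of_mem_Icc ⟨by linarith [hθ.1, pi_pos], hθ.2⟩
  have ha' : 0 < a := by linarith
  have hpow : (sin θ ^ a) ^ 2 ≤ θ := calc
    (sin θ ^ a) ^ 2 = sin θ ^ (a * 2) := by rw [← rpow_mul_natCast hsin.le]; rfl
    _ ≤ sin θ := rpow_le_self_of_le_one hsin.le (sin_le_one θ) (by linarith)
    _ ≤ θ := sin_le hθ.1.le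
  have hanti : coshIntegral a (cos θ) ≤ coshIntegral a 0 :=
    coshIntegral_antitoneOn ha' (by simp) (neg_one_lt_cos_of_mem_Ioo hθ') hcos
  have := coshIntegral_pos ha' (neg_one_lt_cos_of_mem_Ioo hθ')
  rw [boundaryProfile, mul_pow, mul_comm]
  gcongr

lemma boundaryProfileDeriv_pi_div_two (ha : 0 < a) :
    boundaryProfileDeriv a (π / 2) =
      2 * (Gamma ((a + 1) / 2) / Gamma (a / 2)) ^ 2 * boundaryProfile a (π / 2) := by
  have h₁ := (Gamma_pos_of_pos (half_pos ha)).ne'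
  have h₂ := (Gamma_pos_of_pos (half_pos (add_pos ha one_pos))).ne'
  rw [boundaryProfileDeriv, boundaryProfile, sin_pi_div_two, cos_pi_div_two, one_rpow, one_rpow,
    one_rpow, coshIntegral_zero ha, coshIntegral_zero (add_pos ha one_pos),
    show (a + 1 + 1) / 2 = a / 2 + 1 by ring, Gamma_add_one (half_pos ha).ne']
  field_simp
  ring

end BoundaryProfile

section Gluing

lemma hasDerivAt_ite_le {f g f' g' : ℝ → ℝ} {t x : ℝ} (hf : x ≤ t → HasDerivAt f (f' x) x)
    (hg : t ≤ x → HasDerivAt g (g' x) x) (hval : f t = g t) (hderiv : f' t = g' t) :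
    HasDerivAt (fun y => if y ≤ t then f y else g y) (if x ≤ t then f' x else g' x) x := by
  have hg_eq : ∀ y, t ≤ y → (if y ≤ t then f y else g y) = g y := fun y hy => by
    rcases hy.eq_or_lt with rfl | hy
    · rw [if_pos le_rfl, hval]
    · rw [if_neg hy.not_ge]
  rcases lt_trichotomy x t with h | rfl | h
  · rw [if_pos h.le]
    exact (hf h.le).congr_of_eventuallyEq <|
      eventually_of_mem (Iic_mem_nhds h) fun y hy => if_pos hy
  · rw [if_pos le_rfl, ← hasDerivWithinAt_univ, ← Iic_union_Ici (a := x)]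
    refine .union ((hf le_rfl).hasDerivWithinAt.congr (fun y hy => if_pos hy) (if_pos le_rfl)) ?_
    rw [hderiv]
    exact (hg le_rfl).hasDerivWithinAt.congr (fun y hy => hg_eq y hy) (hg_eq x le_rfl)
  · rw [if_neg h.not_ge]
    exact (hg h.le).congr_of_eventuallyEq <|
      eventually_of_mem (Ici_mem_nhds h) fun y hy => hg_eq y hy

end Gluing

section GroundState

/-- The exponent `a ≥ 1 / 2` with `a (1 - a) = c`, at which the angular ground state vanishes on
the sides of the sector. -/
noncomputable def hardyExponent (c : ℝ) : ℝ := (1 + √(1 - 4 * c)) / 2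

/-- The ground state on `(0, γ / 2]` of the angular operator `-d²/dθ² - c / sin² (min θ (π / 2))`,
glued at `π / 2` from a multiple of `boundaryProfile` and a cosine which is even about `γ / 2`. -/
noncomputable def groundState (c γ θ : ℝ) : ℝ :=
  if θ ≤ π / 2 then cos (√c * ((γ - π) / 2)) * boundaryProfile (hardyExponent c) θ
  else boundaryProfile (hardyExponent c) (π / 2) * cos (√c * (γ / 2 - θ))

/-- The derivative of `groundState c γ`. -/
noncomputable def groundStateDeriv (c γ θ : ℝ) : ℝ :=
  if θ ≤ π / 2 then cos (√c * ((γ - π) / 2)) * boundaryProfileDeriv (hardyExponent c) θ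
  else boundaryProfile (hardyExponent c) (π / 2) * (√c * sin (√c * (γ / 2 - θ)))

variable {c γ θ : ℝ}

lemma half_le_hardyExponent (c : ℝ) : 1 / 2 ≤ hardyExponent c := by
  rw [hardyExponent]
  linarith [sqrt_nonneg (1 - 4 * c)]

lemma hardyExponent_pos (c : ℝ) : 0 < hardyExponent c :=
  one_half_pos.trans_le (half_le_hardyExponent c)

lemma hardyExponent_mul_one_sub (hc : c ≤ 1 / 4) : hardyExponent c * (1 - hardyExponent c) = c := by
  rw [hardyExponent]
  linear_combination (-1 / 4) * sq_sqrt (show 0 ≤ 1 - 4 * c by linarith)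

lemma pi_div_two_mem_Ioo : π / 2 ∈ Ioo 0 π := ⟨by positivity, half_lt_self pi_pos⟩

lemma sqrt_mul_mem_Icc (hc : c ≤ 1 / 4) (hγ : γ ≤ 2 * π) (hθ : θ ∈ Icc (π / 2) (γ / 2)) :
    √c * (γ / 2 - θ) ∈ Icc 0 (π / 4) := by
  have hsqrt : √c ≤ 1 / 2 := sqrt_le_iff.2 ⟨by norm_num, by linarith⟩
  have hθγ : 0 ≤ γ / 2 - θ := sub_nonneg.2 hθ.2
  refine ⟨by positivity, ?_⟩
  calc √c * (γ / 2 - θ) ≤ 1 / 2 * (γ / 2 - θ) := by gcongr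
    _ ≤ π / 4 := by linarith [hθ.1]

lemma cos_sqrt_mul_pos (hc : c ≤ 1 / 4) (hγ : γ ≤ 2 * π) (hθ : θ ∈ Icc (π / 2) (γ / 2)) :
    0 < cos (√c * (γ / 2 - θ)) := by
  obtain ⟨h₁, h₂⟩ := sqrt_mul_mem_Icc hc hγ hθ
  exact cos_pos_of_mem_Ioo ⟨by linarith [pi_pos], by linarith [pi_pos]⟩

lemma cos_sqrt_mul_half_pos (hc : c ≤ 1 / 4) (hγ : γ ∈ Ioc π (2 * π)) :
    0 < cos (√c * ((γ - π) / 2)) := by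
  rw [sub_div]
  exact cos_sqrt_mul_pos hc hγ.2 ⟨le_rfl, by linarith [hγ.1]⟩

lemma groundState_matching (hc : c ≤ 1 / 4) (hγ : γ ∈ Ioc π (2 * π)) (h : hardyEq c γ) :
    cos (√c * ((γ - π) / 2)) * boundaryProfileDeriv (hardyExponent c) (π / 2) =
      boundaryProfile (hardyExponent c) (π / 2) * (√c * sin (√c * (γ / 2 - π / 2))) := by
  have hcos := (cos_sqrt_mul_half_pos hc hγ).ne'
  rw [hardyEq, tan_eq_sin_div_cos] at h
  rw [boundaryProfileDeriv_pi_div_two (hardyExponent_pos c),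
    show (hardyExponent c + 1) / 2 = (3 + √(1 - 4 * c)) / 4 by rw [hardyExponent]; ring,
    show hardyExponent c / 2 = (1 + √(1 - 4 * c)) / 4 by rw [hardyExponent]; ring, ← h, ← sub_div,
    ← mul_assoc, mul_comm (boundaryProfile _ _)]
  congr 1
  rw [mul_left_comm, mul_div_cancel₀ _ hcos]

lemma hasDerivAt_groundState (hc : c ≤ 1 / 4) (hγ : γ ∈ Ioc π (2 * π)) (h : hardyEq c γ)
    (hθ : 0 < θ) : HasDerivAt (groundState c γ) (groundStateDeriv c γ θ) θ := by
  refine hasDerivAt_ite_le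
    (f' := fun θ => cos (√c * ((γ - π) / 2)) * boundaryProfileDeriv (hardyExponent c) θ)
    (g' := fun θ => boundaryProfile (hardyExponent c) (π / 2) * (√c * sin (√c * (γ / 2 - θ))))
    (fun hθ' => ?_) (fun _ => ?_) ?_ (groundState_matching hc hγ h)
  · exact (hasDerivAt_boundaryProfile (hardyExponent_pos c)
      ⟨hθ, hθ'.trans_lt pi_div_two_mem_Ioo.2⟩).const_mul _
  · refine ((((hasDerivAt_id' θ).const_sub (γ / 2)).const_mul √c).cos.const_mul _).congr_deriv ?_
    ring
  · rw [← sub_div, mul_comm]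

lemma hasDerivAt_groundStateDeriv (hc : c ∈ Ioc 0 (1 / 4)) (hγ : γ ∈ Ioc π (2 * π))
    (h : hardyEq c γ) (hθ : 0 < θ) :
    HasDerivAt (groundStateDeriv c γ) (-(c / sin (min θ (π / 2)) ^ 2 * groundState c γ θ)) θ := by
  have hderiv := hasDerivAt_ite_le (x := θ) (t := π / 2)
    (f := fun θ => cos (√c * ((γ - π) / 2)) * boundaryProfileDeriv (hardyExponent c) θ)
    (g := fun θ => boundaryProfile (hardyExponent c) (π / 2) * (√c * sin (√c * (γ / 2 - θ))))
    (f' := fun θ => cos (√c * ((γ - π) / 2)) *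
      -(c / sin θ ^ 2 * boundaryProfile (hardyExponent c) θ))
    (g' := fun θ => boundaryProfile (hardyExponent c) (π / 2) * -(c * cos (√c * (γ / 2 - θ))))
    (fun hθ' => ?_) (fun _ => ?_) (groundState_matching hc.2 hγ h) ?_
  · refine hderiv.congr_deriv ?_
    by_cases hθ' : θ ≤ π / 2
    · rw [groundState, if_pos hθ', if_pos hθ', min_eq_left hθ']
      ring
    · rw [groundState, if_neg hθ', if_neg hθ', min_eq_right (le_of_not_ge hθ'), sin_pi_div_two]
      ring
  · have := hasDerivAt_boundaryProfileDeriv (hardyExponent_pos c)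
      ⟨hθ, hθ'.trans_lt pi_div_two_mem_Ioo.2⟩
    rw [hardyExponent_mul_one_sub hc.2] at this
    exact this.const_mul _
  · refine ((((hasDerivAt_id' θ).const_sub (γ / 2)).const_mul √c).sin.const_mul
      √c |>.const_mul _).congr_deriv ?_
    linear_combination (-boundaryProfile (hardyExponent c) (π / 2) * cos (√c * (γ / 2 - θ)))
      * sq_sqrt hc.1.le
  · rw [← sub_div, sin_pi_div_two]
    ring

lemma groundState_pos (hc : c ≤ 1 / 4) (hγ : γ ∈ Ioc π (2 * π)) (hθ : θ ∈ Ioc 0 (γ / 2)) :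
    0 < groundState c γ θ := by
  rw [groundState]
  split_ifs with hθ'
  · exact mul_pos (cos_sqrt_mul_half_pos hc hγ) (boundaryProfile_pos (hardyExponent_pos c)
      ⟨hθ.1, hθ'.trans_lt pi_div_two_mem_Ioo.2⟩)
  · exact mul_pos (boundaryProfile_pos (hardyExponent_pos c) pi_div_two_mem_Ioo)
      (cos_sqrt_mul_pos hc hγ.2 ⟨le_of_not_ge hθ', hθ.2⟩)

lemma groundStateDeriv_nonneg (hc : c ≤ 1 / 4) (hγ : γ ∈ Ioc π (2 * π))
    (hθ : θ ∈ Ioc 0 (γ / 2)) : 0 ≤ groundStateDeriv c γ θ := by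
  rw [groundStateDeriv]
  split_ifs with hθ'
  · exact mul_nonneg (cos_sqrt_mul_half_pos hc hγ).le
      (boundaryProfileDeriv_nonneg (hardyExponent_pos c) ⟨hθ.1, hθ'⟩)
  · obtain ⟨h₁, h₂⟩ := sqrt_mul_mem_Icc hc hγ.2 ⟨le_of_not_ge hθ', hθ.2⟩
    exact mul_nonneg (boundaryProfile_pos (hardyExponent_pos c) pi_div_two_mem_Ioo).le
      (mul_nonneg (sqrt_nonneg c) (sin_nonneg_of_mem_Icc ⟨h₁, by linarith [pi_pos]⟩))

lemma groundStateDeriv_half (hγ : π < γ) : groundStateDeriv c γ (γ / 2) = 0 := by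
  rw [groundStateDeriv, if_neg (by linarith), sub_self, mul_zero, sin_zero, mul_zero, mul_zero]

lemma groundState_sq_le (c γ : ℝ) :
    ∃ C, 0 ≤ C ∧ ∀ θ ∈ Ioc 0 (π / 2), groundState c γ θ ^ 2 ≤ C * θ := by
  refine ⟨(cos (√c * ((γ - π) / 2))) ^ 2 * coshIntegral (hardyExponent c) 0 ^ 2, by positivity,
    fun θ hθ => ?_⟩
  rw [groundState, if_pos hθ.2, mul_pow, mul_assoc]
  gcongr
  exact boundaryProfile_sq_le (half_le_hardyExponent c) hθ

lemma hardyEq_of_isBetaCr {β : ℝ} (h : isBetaCr β) : hardyEq (1 / 4) β := by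
  have hsqrt : √(1 / 4 : ℝ) = 1 / 2 := by
    rw [show (1 / 4 : ℝ) = (1 / 2) ^ 2 by norm_num, sqrt_sq (by norm_num)]
  rw [hardyEq, hsqrt, show 1 / 2 * ((β - π) / 2) = (β - π) / 4 by ring, h.2]
  norm_num
  ring

end GroundState

section Support

variable {E F : Type*} [NormedAddCommGroup E] [NormedSpace ℝ E] [NormedAddCommGroup F]
  [NormedSpace ℝ F] {n : WithTop ℕ∞}

lemma contDiff_of_forall_mem_tsupport {f : E → F} (hf : ∀ x ∈ tsupport f, ContDiffAt ℝ n f x) :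
    ContDiff ℝ n f :=
  contMDiff_iff_contDiff.1 (contMDiff_of_tsupport fun x hx => (hf x hx).contMDiffAt)

lemma exists_pos_subset_Ici {K : Set ℝ} (hK : IsClosed K) (hpos : K ⊆ Ioi 0) :
    ∃ δ > 0, K ⊆ Ici δ := by
  obtain ⟨δ, hδ, hball⟩ :=
    Metric.isOpen_iff.1 hK.isOpen_compl 0 fun h₀ => lt_irrefl (0 : ℝ) (hpos h₀)
  refine ⟨δ, hδ, fun x hx => le_of_not_gt fun (hlt : x < δ) => hball ?_ hx⟩
  rwa [Metric.mem_ball, dist_zero_right, norm_of_nonneg (hpos hx).le]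

lemma intervalIntegral_eq_integral_Ioi {g : ℝ → ℝ} {L : ℝ} (hL : 0 ≤ L)
    (hg : ∀ x, L < x → g x = 0) : ∫ x in 0..L, g x = ∫ x in Ioi 0, g x := by
  rw [intervalIntegral.integral_of_le hL]
  exact (setIntegral_eq_of_subset_of_forall_sdiff_eq_zero measurableSet_Ioi Ioc_subset_Ioi_self
    fun x hx => hg x (lt_of_not_ge fun hle => hx.2 ⟨hx.1, hle⟩)).symm

end Support

section LogCutoff

/-- The function `k (t log x)` extended by zero to `x ≤ 0`. As `t → 0` it varies on an ever longer
logarithmic scale, so that the scale-invariant energy `∫ x χ'²` becomes small compared with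
`∫ χ² / x`. -/
noncomputable def logCutoff (k : ℝ → ℝ) (t x : ℝ) : ℝ := if 0 < x then k (t * log x) else 0

variable {k : ℝ → ℝ} {t x : ℝ}

lemma logCutoff_of_pos (k : ℝ → ℝ) (t : ℝ) (hx : 0 < x) : logCutoff k t x = k (t * log x) :=
  if_pos hx

lemma logCutoff_eq_zero (hk : ∀ s ≤ -1, k s = 0) (ht : 0 < t) (hx : x ≤ exp (-t⁻¹)) :
    logCutoff k t x = 0 := by
  rw [logCutoff]
  split_ifs with hx₀
  · refine hk _ ?_
    calc t * log x ≤ t * -t⁻¹ := by gcongr; exact (log_le_iff_le_exp hx₀).2 hx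
      _ = -1 := by rw [mul_neg, mul_inv_cancel₀ ht.ne']
  · rfl

lemma tsupport_logCutoff_subset (hk : ∀ s ≤ -1, k s = 0) (ht : 0 < t) :
    tsupport (logCutoff k t) ⊆ Ici (exp (-t⁻¹)) :=
  closure_minimal (fun _ hx => le_of_not_ge fun hle => hx (logCutoff_eq_zero hk ht hle))
    isClosed_Ici

lemma logCutoff_eventuallyEq (k : ℝ → ℝ) (t : ℝ) (hx : 0 < x) :
    logCutoff k t =ᶠ[𝓝 x] fun x => k (t * log x) :=
  eventually_of_mem (Ioi_mem_nhds hx) fun _ hy => logCutoff_of_pos k t hy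

lemma contDiff_logCutoff {n : WithTop ℕ∞} (hk : ContDiff ℝ n k) (hk₀ : ∀ s ≤ -1, k s = 0)
    (ht : 0 < t) : ContDiff ℝ n (logCutoff k t) := by
  refine contDiff_of_forall_mem_tsupport fun x hx => ?_
  have hx₀ : 0 < x := (exp_pos _).trans_le (tsupport_logCutoff_subset hk₀ ht hx)
  have hcomp := hk.contDiffAt.comp x ((contDiffAt_log.2 hx₀.ne').const_smul t)
  exact hcomp.congr_of_eventuallyEq (logCutoff_eventuallyEq k t hx₀)

lemma hasDerivAt_logCutoff (hk : Differentiable ℝ k) (t : ℝ) (hx : 0 < x) :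
    HasDerivAt (logCutoff k t) (deriv k (t * log x) * (t / x)) x :=
  ((hk _).hasDerivAt.comp x ((hasDerivAt_log hx.ne').const_mul t)).congr_of_eventuallyEq
    (logCutoff_eventuallyEq k t hx)

lemma integral_comp_mul_log_div (g : ℝ → ℝ) (ht : 0 < t) :
    ∫ x in Ioi 0, g (t * log x) / x = t⁻¹ * ∫ s, g s := by
  rw [← range_exp, ← image_univ, integral_image_eq_integral_abs_deriv_smul MeasurableSet.univ
    (fun s _ => (hasDerivAt_exp s).hasDerivWithinAt) exp_injective.injOn, setIntegral_univ]
  simp_rw [log_exp, abs_exp, smul_eq_mul, mul_div_cancel₀ _ (exp_ne_zero _)]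
  rw [Measure.integral_comp_mul_left, abs_of_pos (inv_pos.2 ht), smul_eq_mul]

lemma integral_logCutoff_sq_div (k : ℝ → ℝ) (ht : 0 < t) :
    ∫ x in Ioi 0, logCutoff k t x ^ 2 / x = t⁻¹ * ∫ s, k s ^ 2 := by
  rw [← integral_comp_mul_log_div (fun s => k s ^ 2) ht]
  exact setIntegral_congr_fun measurableSet_Ioi fun x hx => by
    simp only [logCutoff_of_pos k t hx]

lemma integral_mul_deriv_logCutoff_sq (hk : Differentiable ℝ k) (ht : 0 < t) :
    ∫ x in Ioi 0, x * deriv (logCutoff k t) x ^ 2 = t * ∫ s, deriv k s ^ 2 := by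
  have h := integral_comp_mul_log_div (fun s => deriv k s ^ 2) ht
  calc ∫ x in Ioi 0, x * deriv (logCutoff k t) x ^ 2
      = ∫ x in Ioi 0, t ^ 2 * (deriv k (t * log x) ^ 2 / x) :=
        setIntegral_congr_fun measurableSet_Ioi fun x (hx : 0 < x) => by
          simp only [(hasDerivAt_logCutoff hk t hx).deriv]
          field_simp
    _ = t * ∫ s, deriv k s ^ 2 := by
        rw [integral_const_mul, h]
        field_simp

lemma exists_step_of_energy_le {ε : ℝ} (hε : 0 < ε) :
    ∃ η : ℝ → ℝ, ContDiff ℝ ∞ η ∧ tsupport η ⊆ Ioi 0 ∧ (∀ x, 1 ≤ x → η x = 1) ∧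
      ∀ L, 1 ≤ L → ∫ x in 0..L, x * deriv η x ^ 2 ≤ ε := by
  set k : ℝ → ℝ := fun s => smoothTransition (s + 1)
  have hk : ContDiff ℝ ∞ k := smoothTransition.contDiff.comp (contDiff_id.add contDiff_const)
  have hk₀ : ∀ s ≤ -1, k s = 0 := fun s hs => smoothTransition.zero_of_nonpos (by linarith)
  set A := ∫ s, deriv k s ^ 2
  have : 0 ≤ A := integral_nonneg fun s => sq_nonneg _
  have ht : 0 < ε / (A + 1) := by positivity
  have hone : ∀ x, 1 ≤ x → logCutoff k (ε / (A + 1)) x = 1 := fun x hx => by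
    rw [logCutoff_of_pos _ _ (by linarith)]
    exact smoothTransition.one_of_one_le (by linarith [mul_nonneg ht.le (log_nonneg hx)])
  refine ⟨logCutoff k (ε / (A + 1)), contDiff_logCutoff hk hk₀ ht,
    (tsupport_logCutoff_subset hk₀ ht).trans (Ici_subset_Ioi.2 (exp_pos _)), hone,
    fun L hL => ?_⟩
  rw [intervalIntegral_eq_integral_Ioi (by linarith),
    integral_mul_deriv_logCutoff_sq (hk.differentiable (by simp)) ht, div_mul_eq_mul_div,
    div_le_iff₀ (by positivity)]
  · gcongr
    linarith
  · intro x hx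
    have hconst : logCutoff k (ε / (A + 1)) =ᶠ[𝓝 x] fun _ => 1 :=
      eventually_of_mem (Ioi_mem_nhds (hL.trans_lt hx)) fun y hy => hone y (le_of_lt hy)
    rw [hconst.deriv_eq, deriv_const]
    ring

lemma integral_mul_sq_le_mul_integral {g G : ℝ → ℝ} {C : ℝ} (hL : 0 ≤ L)
    (hG : ∀ x ∈ Ioc 0 1, G x ^ 2 ≤ C * x) (hg : Continuous g) (hg_zero : ∀ x, 1 < x → g x = 0) :
    ∫ x in 0..L, (g x * G x) ^ 2 ≤ C * ∫ x in 0..L, x * g x ^ 2 := by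
  rw [← intervalIntegral.integral_const_mul, intervalIntegral.integral_of_le hL,
    intervalIntegral.integral_of_le hL]
  refine integral_mono_of_nonneg (ae_of_all _ fun x => sq_nonneg _)
    (Continuous.integrableOn_Ioc (by fun_prop))
    ((ae_restrict_mem measurableSet_Ioc).mono fun x hx => ?_)
  rcases le_or_gt x 1 with hle | hlt
  · calc (g x * G x) ^ 2 = G x ^ 2 * g x ^ 2 := by ring
      _ ≤ C * x * g x ^ 2 := by
          gcongr
          exact hG x ⟨hx.1, hle⟩
      _ = C * (x * g x ^ 2) := by ring
  · simp [hg_zero x hlt]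

lemma exists_step_of_energy_mul_le {G : ℝ → ℝ} {C ε : ℝ} (hC : 0 ≤ C)
    (hG : ∀ x ∈ Ioc 0 1, G x ^ 2 ≤ C * x) (hε : 0 < ε) :
    ∃ η : ℝ → ℝ, ContDiff ℝ ∞ η ∧ tsupport η ⊆ Ioi 0 ∧ (∀ x, 1 ≤ x → η x = 1) ∧
      ∀ L, 1 ≤ L → ∫ x in 0..L, (deriv η x * G x) ^ 2 ≤ ε := by
  obtain ⟨η, hη, hη_supp, hη_one, hη_energy⟩ :=
    exists_step_of_energy_le (show 0 < ε / (C + 1) by positivity)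
  have hη'_zero : ∀ x, 1 < x → deriv η x = 0 := fun x hx => by
    rw [EventuallyEq.deriv_eq (eventually_of_mem (Ici_mem_nhds hx) hη_one), deriv_const]
  refine ⟨η, hη, hη_supp, hη_one, fun L hL => ?_⟩
  calc ∫ x in 0..L, (deriv η x * G x) ^ 2
      ≤ C * ∫ x in 0..L, x * deriv η x ^ 2 :=
        integral_mul_sq_le_mul_integral (one_pos.le.trans hL) hG
          (hη.continuous_deriv (by simp)) hη'_zero
    _ ≤ C * (ε / (C + 1)) := by
        gcongr
        exact hη_energy L hL
    _ ≤ ε := by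
        rw [mul_div_left_comm]
        exact mul_le_of_le_one_right hε.le ((div_le_one (by positivity)).2 (by linarith))

lemma exists_bump_of_energy_le {ε : ℝ} (hε : 0 < ε) :
    ∃ χ : ℝ → ℝ, ContDiff ℝ ∞ χ ∧ tsupport χ ⊆ Ioc 0 1 ∧
      0 < ∫ x in Ioi 0, χ x ^ 2 / x ∧
      ∫ x in Ioi 0, x * deriv χ x ^ 2 ≤ ε * ∫ x in Ioi 0, χ x ^ 2 / x := by
  let k : ContDiffBump (-1 / 2 : ℝ) := ⟨1 / 4, 1 / 2, by norm_num, by norm_num⟩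
  have hk : ContDiff ℝ ∞ k := k.contDiff
  have hk₀ : ∀ s ≤ -1, k s = 0 := fun s hs => k.zero_of_le_dist <| by
    rw [dist_eq, abs_of_neg (by linarith)]; linarith
  have hk₁ : ∀ s, 0 ≤ s → k s = 0 := fun s hs => k.zero_of_le_dist <| by
    rw [dist_eq, abs_of_pos (by linarith)]; linarith
  set A := ∫ s, deriv k s ^ 2
  set B := ∫ s, k s ^ 2 with hB
  have : 0 ≤ A := integral_nonneg fun s => sq_nonneg _
  have hB_pos : 0 < B := by
    have hsupp : HasCompactSupport fun s => k s ^ 2 :=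
      k.hasCompactSupport.comp_left (zero_pow two_ne_zero)
    refine (hk.continuous.pow 2).integral_pos_of_hasCompactSupport_nonneg_nonzero hsupp
      (fun s => sq_nonneg _) (x := -1 / 2) ?_
    rw [k.one_of_mem_closedBall (Metric.mem_closedBall_self k.rIn_pos.le), one_pow]
    exact one_ne_zero
  have ht : 0 < √(ε * B / (A + 1)) := sqrt_pos.2 (by positivity)
  have htA : √(ε * B / (A + 1)) ^ 2 * A ≤ ε * B := by
    rw [sq_sqrt (by positivity), div_mul_eq_mul_div, div_le_iff₀ (by positivity)]
    gcongr
    linarith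
  set t := √(ε * B / (A + 1))
  have hsupp : tsupport (logCutoff k t) ⊆ Iic 1 :=
    closure_minimal (fun x hx => le_of_not_gt fun hlt => hx <| by
      rw [logCutoff_of_pos _ _ (one_pos.trans hlt)]
      exact hk₁ _ (mul_nonneg ht.le (log_nonneg hlt.le))) isClosed_Iic
  refine ⟨logCutoff k t, contDiff_logCutoff hk hk₀ ht, fun x hx =>
    ⟨(exp_pos _).trans_le (tsupport_logCutoff_subset hk₀ ht hx), hsupp hx⟩, ?_, ?_⟩
  · rw [integral_logCutoff_sq_div _ ht, ← hB]
    positivity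
  · rw [integral_logCutoff_sq_div _ ht, ← hB,
      integral_mul_deriv_logCutoff_sq (hk.differentiable (by simp)) ht]
    calc t * A = t⁻¹ * (t ^ 2 * A) := by field_simp
      _ ≤ t⁻¹ * (ε * B) := by gcongr
      _ = ε * (t⁻¹ * B) := by ring

end LogCutoff

section Jacobi

variable {f g η η' G G' q : ℝ → ℝ} {δ L : ℝ}

lemma intervalIntegral_congr_Ioo {a b : ℝ} (hab : a ≤ b) (h : EqOn f g (Ioo a b)) :
    ∫ x in a..b, f x = ∫ x in a..b, g x :=
  intervalIntegral.integral_congr_uIoo (by rwa [uIoo_of_le hab])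

lemma intervalIntegral_eq_of_eqOn_zero (hδ : 0 ≤ δ) (hL : δ ≤ L) (hf : EqOn f 0 (Ioc 0 δ)) :
    ∫ x in 0..L, f x = ∫ x in δ..L, f x := by
  rw [intervalIntegral.integral_of_le (hδ.trans hL), intervalIntegral.integral_of_le hL]
  refine setIntegral_eq_of_subset_of_forall_sdiff_eq_zero measurableSet_Ioc
    (Ioc_subset_Ioc_left hδ) fun x hx => hf ⟨hx.1.1, le_of_not_gt fun hlt => hx.2 ⟨hlt, hx.1.2⟩⟩

lemma integral_sq_deriv_mul_of_le (hL : δ ≤ L)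
    (hη : ∀ x ∈ Icc δ L, HasDerivAt η (η' x) x) (hη' : ContinuousOn η' (Icc δ L))
    (hG : ∀ x ∈ Icc δ L, HasDerivAt G (G' x) x)
    (hG' : ∀ x ∈ Icc δ L, HasDerivAt G' (-(q x * G x)) x) (hq : ContinuousOn q (Icc δ L)) :
    ∫ x in δ..L, (η' x * G x + η x * G' x) ^ 2 =
      (∫ x in δ..L, q x * (η x * G x) ^ 2) + (∫ x in δ..L, (η' x * G x) ^ 2) +
        (η L ^ 2 * (G L * G' L) - η δ ^ 2 * (G δ * G' δ)) := by
  have cη : ContinuousOn η (Icc δ L) := fun x hx => (hη x hx).continuousAt.continuousWithinAt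
  have cG : ContinuousOn G (Icc δ L) := fun x hx => (hG x hx).continuousAt.continuousWithinAt
  have cG' : ContinuousOn G' (Icc δ L) := fun x hx => (hG' x hx).continuousAt.continuousWithinAt
  have hint {g : ℝ → ℝ} (hg : ContinuousOn g (Icc δ L)) : IntervalIntegrable g volume δ L :=
    hg.intervalIntegrable_of_Icc hL
  have hd : ∀ x ∈ uIcc δ L, HasDerivAt (fun x => η x ^ 2 * (G x * G' x))
      ((η' x * G x + η x * G' x) ^ 2 - q x * (η x * G x) ^ 2 - (η' x * G x) ^ 2) x := by
    intro x hx
    rw [uIcc_of_le hL] at hx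
    refine (((hη x hx).pow 2).mul ((hG x hx).mul (hG' x hx))).congr_deriv ?_
    simp only [Pi.pow_apply, Pi.mul_apply]
    push_cast
    ring
  have h₁ : IntervalIntegrable (fun x => (η' x * G x + η x * G' x) ^ 2) volume δ L :=
    hint (by fun_prop)
  have h₂ : IntervalIntegrable (fun x => q x * (η x * G x) ^ 2) volume δ L := hint (by fun_prop)
  have h₃ : IntervalIntegrable (fun x => (η' x * G x) ^ 2) volume δ L := hint (by fun_prop)
  rw [← intervalIntegral.integral_eq_sub_of_hasDerivAt hd ((h₁.sub h₂).sub h₃),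
    intervalIntegral.integral_sub (h₁.sub h₂) h₃, intervalIntegral.integral_sub h₁ h₂]
  ring

lemma integral_sq_deriv_mul (hL : 0 < L) (hδ : 0 < δ) (hηδ : ∀ x < δ, η x = 0)
    (hη : ∀ x ∈ Ioc 0 L, HasDerivAt η (η' x) x) (hη' : ContinuousOn η' (Ioc 0 L))
    (hG : ∀ x ∈ Ioc 0 L, HasDerivAt G (G' x) x)
    (hG' : ∀ x ∈ Ioc 0 L, HasDerivAt G' (-(q x * G x)) x) (hq : ContinuousOn q (Ioc 0 L)) :
    ∫ x in 0..L, (η' x * G x + η x * G' x) ^ 2 =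
      (∫ x in 0..L, q x * (η x * G x) ^ 2) + (∫ x in 0..L, (η' x * G x) ^ 2) +
        η L ^ 2 * (G L * G' L) := by
  obtain ⟨ρ, hρ, hρδL⟩ := exists_between (lt_min hδ hL)
  obtain ⟨hρδ, hρL⟩ := lt_min_iff.1 hρδL
  have hsub : Icc ρ L ⊆ Ioc 0 L := fun x hx => ⟨hρ.trans_le hx.1, hx.2⟩
  have hzero : ∀ x ∈ Ioc 0 ρ, η x = 0 ∧ η' x = 0 := fun x hx => by
    have hxδ := hx.2.trans_lt hρδ
    refine ⟨hηδ x hxδ, (hη x ⟨hx.1, hx.2.trans hρL.le⟩).unique ?_⟩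
    exact (hasDerivAt_const x 0).congr_of_eventuallyEq
      (eventually_of_mem (Iio_mem_nhds hxδ) hηδ)
  have hcut {g : ℝ → ℝ} (hg : ∀ x, η x = 0 ∧ η' x = 0 → g x = 0) :
      ∫ x in 0..L, g x = ∫ x in ρ..L, g x :=
    intervalIntegral_eq_of_eqOn_zero hρ.le hρL.le fun x hx => hg x (hzero x hx)
  rw [hcut, hcut, hcut, integral_sq_deriv_mul_of_le hρL.le (fun x hx => hη x (hsub hx))
    (hη'.mono hsub) (fun x hx => hG x (hsub hx)) (fun x hx => hG' x (hsub hx)) (hq.mono hsub),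
    hηδ ρ hρδ]
  · ring
  all_goals
    rintro x ⟨h, h'⟩
    simp [h, h']

lemma integral_mul_sq_le_integral_sq_deriv (hL : 0 < L) (hf : ContDiff ℝ 1 f)
    (hsupp : tsupport f ⊆ Ioi 0) (hG : ∀ x ∈ Ioc 0 L, HasDerivAt G (G' x) x)
    (hG' : ∀ x ∈ Ioc 0 L, HasDerivAt G' (-(q x * G x)) x) (hq : ContinuousOn q (Ioc 0 L))
    (hG_pos : ∀ x ∈ Ioc 0 L, 0 < G x) (hG'L : 0 ≤ G' L) :
    ∫ x in 0..L, q x * f x ^ 2 ≤ ∫ x in 0..L, deriv f x ^ 2 := by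
  obtain ⟨δ, hδ, hfδ⟩ := exists_pos_subset_Ici (isClosed_tsupport f) hsupp
  have hcG : ContinuousOn G (Ioc 0 L) := fun x hx => (hG x hx).continuousAt.continuousWithinAt
  have hcG' : ContinuousOn G' (Ioc 0 L) := fun x hx => (hG' x hx).continuousAt.continuousWithinAt
  have hcf := hf.continuous
  have := hf.continuous_deriv le_rfl
  have jacobi := integral_sq_deriv_mul (η := fun x => f x / G x)
    (η' := fun x => (deriv f x * G x - f x * G' x) / G x ^ 2) hL hδ
    (fun x hx => by
      rw [image_eq_zero_of_notMem_tsupport fun hmem => hx.not_ge (hfδ hmem), zero_div])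
    (fun x hx => (hf.differentiable one_ne_zero x).hasDerivAt.div (hG x hx) (hG_pos x hx).ne')
    (ContinuousOn.div (by fun_prop) (by fun_prop) fun x hx => pow_ne_zero 2 (hG_pos x hx).ne')
    hG hG' hq
  calc ∫ x in 0..L, q x * f x ^ 2
      = ∫ x in 0..L, q x * (f x / G x * G x) ^ 2 :=
        intervalIntegral_congr_Ioo hL.le fun x hx => by
          simp only [div_mul_cancel₀ _ (hG_pos x (Ioo_subset_Ioc_self hx)).ne']
    _ ≤ ∫ x in 0..L,
          ((deriv f x * G x - f x * G' x) / G x ^ 2 * G x + f x / G x * G' x) ^ 2 := by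
        rw [jacobi, add_assoc]
        refine le_add_of_nonneg_right (add_nonneg ?_ ?_)
        · exact intervalIntegral.integral_nonneg hL.le fun x _ => sq_nonneg _
        · exact mul_nonneg (sq_nonneg _) (mul_nonneg (hG_pos L ⟨hL, le_rfl⟩).le hG'L)
    _ = ∫ x in 0..L, deriv f x ^ 2 := intervalIntegral_congr_Ioo hL.le fun x hx => by
        have := (hG_pos x (Ioo_subset_Ioc_self hx)).ne'
        field_simp
        ring

end Jacobi

section AngularHardyInequality

/-- The distance from `(cos θ, sin θ)` to the boundary of the sector of angle `β ≤ 2 * π`, for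
`θ ∈ (0, β)`: see `infDist_polarPoint_frontier_sector`. -/
noncomputable def angularDist (β θ : ℝ) : ℝ := sin (min (min θ (β - θ)) (π / 2))

/-- The Hardy inequality on `(0, β)` with constant `c` and weight `angularDist β`, which is the
angular part of the Hardy inequality on the sector of angle `β`. -/
def AngularHardyInequality (β c : ℝ) : Prop :=
  ∀ φ : ℝ → ℝ, ContDiff ℝ 1 φ → tsupport φ ⊆ Ioo 0 β →
    c * ∫ θ in 0..β, φ θ ^ 2 / angularDist β θ ^ 2 ≤ ∫ θ in 0..β, deriv φ θ ^ 2

variable {β γ c c₀ θ L : ℝ} {f φ : ℝ → ℝ}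

lemma continuous_sq_div_sq {X : Type*} [TopologicalSpace X] {f w : X → ℝ} (hf : Continuous f)
    (hw : Continuous w) (h : ∀ x ∈ tsupport f, w x ≠ 0) :
    Continuous fun x => f x ^ 2 / w x ^ 2 := by
  refine continuous_of_tsupport fun x hx => ?_
  have hx : x ∈ tsupport f :=
    closure_mono (Function.support_subset_iff'.2 fun y hy => by simp_all) hx
  exact (hf.continuousAt.pow 2).div (hw.continuousAt.pow 2) (pow_ne_zero 2 (h x hx))

lemma continuous_angularDist (β : ℝ) : Continuous (angularDist β) := by
  unfold angularDist
  fun_prop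

lemma sin_min_pi_div_two_pos (hθ : 0 < θ) : 0 < sin (min θ (π / 2)) :=
  sin_pos_of_pos_of_lt_pi (lt_min hθ pi_div_two_mem_Ioo.1)
    ((min_le_right _ _).trans_lt pi_div_two_mem_Ioo.2)

lemma angularDist_pos (hθ : θ ∈ Ioo 0 β) : 0 < angularDist β θ :=
  sin_min_pi_div_two_pos (lt_min hθ.1 (sub_pos.2 hθ.2))

lemma angularDist_of_le_half (hθ : θ ≤ β / 2) : angularDist β θ = sin (min θ (π / 2)) := by
  rw [angularDist, min_eq_left (by linarith : θ ≤ β - θ)]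

lemma angularDist_sub (β θ : ℝ) : angularDist β (β - θ) = angularDist β θ := by
  rw [angularDist, angularDist, sub_sub_cancel, min_comm θ]

lemma integral_eq_integral_half_add (hφ : Continuous φ) (β : ℝ) :
    ∫ θ in 0..β, φ θ = (∫ θ in 0..β / 2, φ θ) + ∫ θ in 0..β / 2, φ (β - θ) := by
  rw [intervalIntegral.integral_comp_sub_left, sub_zero, sub_half,
    intervalIntegral.integral_add_adjacent_intervals (hφ.intervalIntegrable _ _)
      (hφ.intervalIntegrable _ _)]

lemma mul_integral_sq_div_le_of_hardyEq (hc : c ∈ Ioc 0 (1 / 4)) (hγ : γ ∈ Ioc π (2 * π))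
    (h : hardyEq c γ) (hL : L ∈ Ioc 0 (γ / 2)) (hf : ContDiff ℝ 1 f)
    (hsupp : tsupport f ⊆ Ioi 0) :
    c * ∫ θ in 0..L, f θ ^ 2 / sin (min θ (π / 2)) ^ 2 ≤ ∫ θ in 0..L, deriv f θ ^ 2 := by
  rw [← intervalIntegral.integral_const_mul]
  simp_rw [mul_div_left_comm c, mul_comm (f _ ^ 2)]
  exact integral_mul_sq_le_integral_sq_deriv hL.1 hf hsupp
    (fun θ hθ => hasDerivAt_groundState hc.2 hγ h hθ.1)
    (fun θ hθ => hasDerivAt_groundStateDeriv hc hγ h hθ.1)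
    (ContinuousOn.div (by fun_prop) (by fun_prop) fun θ hθ =>
      pow_ne_zero 2 (sin_min_pi_div_two_pos hθ.1).ne')
    (fun θ hθ => groundState_pos hc.2 hγ ⟨hθ.1, hθ.2.trans hL.2⟩)
    (groundStateDeriv_nonneg hc.2 hγ hL)

lemma angularHardyInequality_of_hardyEq (hc : c ∈ Ioc 0 (1 / 4)) (hγ : γ ∈ Ioc π (2 * π))
    (h : hardyEq c γ) (hβ : β ∈ Ioc 0 γ) : AngularHardyInequality β c := by
  intro φ hφ hsupp
  have hL : β / 2 ∈ Ioc 0 (γ / 2) := ⟨half_pos hβ.1, by linarith [hβ.2]⟩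
  have half {f : ℝ → ℝ} (hf : ContDiff ℝ 1 f) (hf_supp : tsupport f ⊆ Ioi 0) :
      c * ∫ θ in 0..β / 2, f θ ^ 2 / angularDist β θ ^ 2 ≤ ∫ θ in 0..β / 2, deriv f θ ^ 2 := by
    convert mul_integral_sq_div_le_of_hardyEq hc hγ h hL hf hf_supp using 2
    refine intervalIntegral.integral_congr fun θ hθ => ?_
    rw [uIcc_of_le hL.1.le] at hθ
    simp only [angularDist_of_le_half hθ.2]
  have hrefl : tsupport (fun θ => φ (β - θ)) ⊆ Ioi 0 := by
    rw [show (fun θ => φ (β - θ)) = φ ∘ Homeomorph.subLeft β from rfl,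
      tsupport_comp_eq_preimage]
    exact fun θ hθ => (sub_lt_self_iff β).1 (hsupp hθ).2
  have hcq := continuous_sq_div_sq hφ.continuous (continuous_angularDist β)
    fun θ hθ => (angularDist_pos (hsupp hθ)).ne'
  have hcd : Continuous fun θ => deriv φ θ ^ 2 := (hφ.continuous_deriv le_rfl).pow 2
  rw [integral_eq_integral_half_add hcq, integral_eq_integral_half_add hcd, mul_add]
  refine add_le_add (half hφ fun θ hθ => (hsupp hθ).1) ?_
  simpa only [angularDist_sub, deriv_comp_const_sub, neg_sq] using half (by fun_prop) hrefl

lemma exists_even_extension (hf : ContDiff ℝ 1 f) (hsupp : tsupport f ⊆ Ioi 0)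
    (hf' : deriv f (β / 2) = 0) :
    ∃ φ : ℝ → ℝ, ContDiff ℝ 1 φ ∧ tsupport φ ⊆ Ioo 0 β ∧ (∀ θ ≤ β / 2, φ θ = f θ) ∧
      ∀ θ, φ (β - θ) = φ θ := by
  set φ : ℝ → ℝ := fun θ => if θ ≤ β / 2 then f θ else f (β - θ)
  have hderiv : ∀ θ, HasDerivAt φ (if θ ≤ β / 2 then deriv f θ else -deriv f (β - θ)) θ := fun θ =>
    have hf_deriv (θ : ℝ) : HasDerivAt f (deriv f θ) θ :=
      (hf.differentiable one_ne_zero θ).hasDerivAt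
    hasDerivAt_ite_le (f' := deriv f) (g' := fun θ => -deriv f (β - θ))
      (fun _ => hf_deriv θ) (fun _ => (hf_deriv (β - θ)).comp_const_sub β θ)
      (by rw [sub_half]) (by rw [sub_half, hf', neg_zero])
  obtain ⟨δ, hδ, hfδ⟩ := exists_pos_subset_Ici (isClosed_tsupport f) hsupp
  have hfδ' : ∀ θ, f θ ≠ 0 → δ ≤ θ := fun θ hθ => hfδ (subset_tsupport f hθ)
  refine ⟨φ, contDiff_one_iff_deriv.2 ⟨fun θ => (hderiv θ).differentiableAt, ?_⟩, ?_,
    fun θ hθ => if_pos hθ, fun θ => ?_⟩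
  · rw [funext fun θ => (hderiv θ).deriv]
    have hcf' := hf.continuous_deriv le_rfl
    refine Continuous.if_le hcf' (by fun_prop) continuous_id continuous_const fun θ hθ => ?_
    rw [hθ, sub_half, hf', neg_zero]
  · refine (closure_minimal (fun θ (hθ : φ θ ≠ 0) => ?_) isClosed_Icc).trans
      (Icc_subset_Ioo hδ (sub_lt_self β hδ))
    simp only [φ] at hθ
    split_ifs at hθ with hle
    · exact ⟨hfδ' θ hθ, by linarith [hfδ' θ hθ]⟩
    · exact ⟨by linarith [hfδ' _ hθ], by linarith [hfδ' _ hθ]⟩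
  · simp only [φ, sub_sub_cancel]
    split_ifs with h₁ h₂ h₂
    · rw [show β - θ = θ by linarith]
    · rfl
    · rfl
    · linarith

lemma AngularHardyInequality.half (h : AngularHardyInequality β c) (hβ : 0 < β)
    (hf : ContDiff ℝ 1 f) (hsupp : tsupport f ⊆ Ioi 0) (hf' : deriv f (β / 2) = 0) :
    c * ∫ θ in 0..β / 2, f θ ^ 2 / angularDist β θ ^ 2 ≤ ∫ θ in 0..β / 2, deriv f θ ^ 2 := by
  obtain ⟨φ, hφ, hφ_supp, hφf, hφ_symm⟩ := exists_even_extension hf hsupp hf'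
  have hφ' : ∀ θ, deriv φ (β - θ) ^ 2 = deriv φ θ ^ 2 := fun θ => by
    rw [← neg_sq, ← deriv_comp_const_sub, funext hφ_symm]
  have hφf' : ∀ θ < β / 2, deriv φ θ = deriv f θ := fun θ hθ =>
    EventuallyEq.deriv_eq (eventually_of_mem (Iic_mem_nhds hθ) hφf)
  have hcq := continuous_sq_div_sq hφ.continuous (continuous_angularDist β)
    fun θ hθ => (angularDist_pos (hφ_supp hθ)).ne'
  have hmain := h φ hφ hφ_supp
  have hcd : Continuous fun θ => deriv φ θ ^ 2 := (hφ.continuous_deriv le_rfl).pow 2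
  rw [integral_eq_integral_half_add hcq, integral_eq_integral_half_add hcd] at hmain
  simp only [hφ_symm, angularDist_sub, hφ'] at hmain
  have hleft : ∫ θ in 0..β / 2, φ θ ^ 2 / angularDist β θ ^ 2 =
      ∫ θ in 0..β / 2, f θ ^ 2 / angularDist β θ ^ 2 :=
    intervalIntegral_congr_Ioo (half_pos hβ).le fun θ hθ => by simp only [hφf θ hθ.2.le]
  have hright : ∫ θ in 0..β / 2, deriv φ θ ^ 2 = ∫ θ in 0..β / 2, deriv f θ ^ 2 :=
    intervalIntegral_congr_Ioo (half_pos hβ).le fun θ hθ => by simp only [hφf' θ hθ.2]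
  rw [hleft, hright] at hmain
  linarith

lemma contDiffAt_groundState (hc : c ∈ Ioc 0 (1 / 4)) (hγ : γ ∈ Ioc π (2 * π))
    (h : hardyEq c γ) (hθ : 0 < θ) : ContDiffAt ℝ 1 (groundState c γ) θ :=
  contDiffAt_one_iff.2 ⟨fun x => .toSpanSingleton ℝ (groundStateDeriv c γ x), Ioi 0,
    Ioi_mem_nhds hθ, fun _ hx =>
      (ContinuousLinearMap.toSpanSingletonCLE.continuous.continuousAt.comp
        (hasDerivAt_groundStateDeriv hc hγ h hx).continuousAt).continuousWithinAt,
    fun _ hx => (hasDerivAt_groundState hc.2 hγ h hx).hasFDerivAt⟩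

lemma exists_integral_sq_deriv_le_of_hardyEq (hc : c ∈ Ioc 0 (1 / 4)) (hγ : γ ∈ Ioc π (2 * π))
    (h : hardyEq c γ) {ε : ℝ} (hε : 0 < ε) :
    ∃ f : ℝ → ℝ, ContDiff ℝ 1 f ∧ tsupport f ⊆ Ioi 0 ∧ deriv f (γ / 2) = 0 ∧
      (∀ θ, 1 ≤ θ → f θ = groundState c γ θ) ∧
      ∫ θ in 0..γ / 2, deriv f θ ^ 2 ≤
        (c * ∫ θ in 0..γ / 2, f θ ^ 2 / sin (min θ (π / 2)) ^ 2) + ε := by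
  have hπ := pi_gt_three
  have hγ_half : 1 < γ / 2 := by linarith [hγ.1]
  obtain ⟨C, hC, hGC⟩ := groundState_sq_le c γ
  obtain ⟨η, hη, hη_supp, hη_one, hη_energy⟩ := exists_step_of_energy_mul_le hC
    (fun θ hθ => hGC θ ⟨hθ.1, by linarith [hθ.2]⟩) hε
  have hη' : ∀ θ, HasDerivAt η (deriv η θ) θ := fun θ =>
    (hη.differentiable (by simp) θ).hasDerivAt
  have hη'_half : deriv η (γ / 2) = 0 := by
    rw [EventuallyEq.deriv_eq (eventually_of_mem (Ici_mem_nhds hγ_half) hη_one), deriv_const]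
  have hderiv : ∀ θ, 0 < θ → HasDerivAt (fun θ => η θ * groundState c γ θ)
      (deriv η θ * groundState c γ θ + η θ * groundStateDeriv c γ θ) θ := fun θ hθ =>
    (hη' θ).mul (hasDerivAt_groundState hc.2 hγ h hθ)
  obtain ⟨δ, hδ, hηδ⟩ := exists_pos_subset_Ici (isClosed_tsupport η) hη_supp
  have jacobi := integral_sq_deriv_mul (one_pos.trans hγ_half) hδ
    (fun θ hθ => image_eq_zero_of_notMem_tsupport fun hmem => hθ.not_ge (hηδ hmem))
    (fun θ _ => hη' θ) (hη.continuous_deriv (by simp)).continuousOn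
    (fun θ hθ => hasDerivAt_groundState hc.2 hγ h hθ.1)
    (fun θ hθ => hasDerivAt_groundStateDeriv hc hγ h hθ.1)
    (ContinuousOn.div (by fun_prop) (by fun_prop) fun θ hθ =>
      pow_ne_zero 2 (sin_min_pi_div_two_pos hθ.1).ne')
  refine ⟨fun θ => η θ * groundState c γ θ, contDiff_of_forall_mem_tsupport fun θ hθ => ?_,
    (tsupport_mul_subset_left).trans hη_supp, ?_, fun θ hθ => ?_, ?_⟩
  · exact (hη.contDiffAt.of_le (by simp)).mul
      (contDiffAt_groundState hc hγ h (hη_supp (tsupport_mul_subset_left hθ)))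
  · rw [(hderiv _ (one_pos.trans hγ_half)).deriv, hη'_half,
      groundStateDeriv_half hγ.1, zero_mul, mul_zero, add_zero]
  · simp only [hη_one θ hθ, one_mul]
  · rw [groundStateDeriv_half hγ.1, mul_zero, mul_zero, add_zero] at jacobi
    calc ∫ θ in 0..γ / 2, deriv (fun θ => η θ * groundState c γ θ) θ ^ 2
        = ∫ θ in 0..γ / 2,
            (deriv η θ * groundState c γ θ + η θ * groundStateDeriv c γ θ) ^ 2 :=
          intervalIntegral_congr_Ioo (one_pos.trans hγ_half).le fun θ hθ => by
            simp only [(hderiv θ hθ.1).deriv]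
      _ ≤ _ := by
          rw [jacobi, ← intervalIntegral.integral_const_mul]
          simp_rw [mul_div_left_comm c, mul_comm ((_ * _) ^ 2)]
          gcongr
          exact hη_energy _ hγ_half.le

lemma integral_groundState_sq_pos (hc : c ∈ Ioc 0 (1 / 4)) (hγ : γ ∈ Ioc π (2 * π))
    (h : hardyEq c γ) : 0 < ∫ θ in π / 2..γ / 2, groundState c γ θ ^ 2 := by
  have hlt : π / 2 < γ / 2 := by linarith [hγ.1]
  refine intervalIntegral.intervalIntegral_pos_of_pos_on
    (ContinuousOn.intervalIntegrable_of_Icc hlt.le fun θ hθ => ?_) (fun θ hθ => ?_) hlt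
  · have hθ₀ : 0 < θ := pi_div_two_pos.trans_le hθ.1
    exact ((hasDerivAt_groundState hc.2 hγ h hθ₀).continuousAt.pow 2).continuousWithinAt
  · exact pow_pos (groundState_pos hc.2 hγ ⟨pi_div_two_pos.trans hθ.1, hθ.2.le⟩) 2

lemma AngularHardyInequality.le_of_hardyEq (h : AngularHardyInequality β c)
    (hβ : β ∈ Ioc π (2 * π)) (hc₀ : c₀ ∈ Ioc 0 (1 / 4)) (h₀ : hardyEq c₀ β) : c ≤ c₀ := by
  by_contra! hlt
  have hπ := pi_gt_three
  have hβ₂ : π / 2 < β / 2 := by linarith [hβ.1]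
  have hβ₀ : 0 < β / 2 := by linarith
  set X := ∫ θ in π / 2..β / 2, groundState c₀ β θ ^ 2
  have hX : 0 < X := integral_groundState_sq_pos hc₀ hβ h₀
  obtain ⟨f, hf, hsupp, hf', hfG, hfε⟩ := exists_integral_sq_deriv_le_of_hardyEq hc₀ hβ h₀
    (show 0 < (c - c₀) * X / 2 from half_pos (mul_pos (sub_pos.2 hlt) hX))
  have hmain := h.half (by linarith) hf hsupp hf'
  rw [intervalIntegral.integral_congr (g := fun θ => f θ ^ 2 / sin (min θ (π / 2)) ^ 2)
    fun θ hθ => by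
      rw [uIcc_of_le hβ₀.le] at hθ
      simp only [angularDist_of_le_half hθ.2]] at hmain
  set I := ∫ θ in 0..β / 2, f θ ^ 2 / sin (min θ (π / 2)) ^ 2
  have hXI : X ≤ I := by
    calc X = ∫ θ in π / 2..β / 2, f θ ^ 2 / sin (min θ (π / 2)) ^ 2 := by
          refine intervalIntegral_congr_Ioo hβ₂.le fun θ hθ => ?_
          simp only [min_eq_right hθ.1.le, sin_pi_div_two, hfG θ (by linarith [hθ.1])]
          ring
      _ ≤ I := intervalIntegral.integral_mono_interval (by linarith) hβ₂.le le_rfl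
          (ae_of_all _ fun θ => by positivity)
          (Continuous.intervalIntegrable (continuous_sq_div_sq hf.continuous (by fun_prop)
            fun θ hθ => (sin_min_pi_div_two_pos (hsupp hθ)).ne') _ _)
  nlinarith [mul_le_mul_of_nonneg_left hXI (sub_pos.2 hlt).le, mul_pos (sub_pos.2 hlt) hX]

lemma angularDist_le (hθ : θ ∈ Ioo 0 β) : angularDist β θ ≤ θ :=
  (sin_le (lt_min (lt_min hθ.1 (sub_pos.2 hθ.2)) pi_div_two_mem_Ioo.1).le).trans
    ((min_le_left _ _).trans (min_le_left _ _))

lemma hasDerivAt_one_div_two_mul_sqrt {x : ℝ} (hx : 0 < x) :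
    HasDerivAt (fun x => 1 / (2 * √x)) (-(1 / (4 * x ^ 2) * √x)) x := by
  have := sqrt_pos.2 hx
  refine ((hasDerivAt_const x (1 : ℝ)).div ((hasDerivAt_sqrt hx.ne').const_mul 2)
    (by positivity)).congr_deriv ?_
  field_simp
  linear_combination (4 * √x ^ 2 + 4 * x) * sq_sqrt hx.le

lemma integral_sq_deriv_mul_sqrt (hL : 1 < L) (hf : ContDiff ℝ 1 f)
    (hsupp : tsupport f ⊆ Ioc 0 1) :
    ∫ x in 0..L, deriv (fun x => f x * √x) x ^ 2 =
      1 / 4 * (∫ x in Ioi 0, f x ^ 2 / x) + ∫ x in Ioi 0, x * deriv f x ^ 2 := by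
  have hL₀ : 0 < L := one_pos.trans hL
  have hf_zero : ∀ x, 1 < x → f x = 0 ∧ deriv f x = 0 := fun x hx =>
    have hx : x ∉ tsupport f := fun hmem => hx.not_ge (hsupp hmem).2
    ⟨image_eq_zero_of_notMem_tsupport hx, deriv_of_notMem_tsupport hx⟩
  have hderiv : ∀ x, HasDerivAt f (deriv f x) x := fun x =>
    (hf.differentiable one_ne_zero x).hasDerivAt
  obtain ⟨δ, hδ, hfδ⟩ := exists_pos_subset_Ici (isClosed_tsupport f)
    (hsupp.trans Ioc_subset_Ioi_self)
  have jacobi := integral_sq_deriv_mul (G := sqrt) hL₀ hδ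
    (fun x hx => image_eq_zero_of_notMem_tsupport fun hmem => hx.not_ge (hfδ hmem))
    (fun x _ => hderiv x) (hf.continuous_deriv le_rfl).continuousOn
    (fun x hx => hasDerivAt_sqrt hx.1.ne') (fun x hx => hasDerivAt_one_div_two_mul_sqrt hx.1)
    (ContinuousOn.div (by fun_prop) (by fun_prop) fun x hx => by have := hx.1; positivity)
  have hpotential : ∫ x in 0..L, 1 / (4 * x ^ 2) * (f x * √x) ^ 2 =
      1 / 4 * ∫ x in Ioi 0, f x ^ 2 / x := by
    rw [← intervalIntegral_eq_integral_Ioi hL₀.le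
      fun x hx => by rw [(hf_zero x (hL.trans hx)).1, zero_pow two_ne_zero, zero_div],
      ← intervalIntegral.integral_const_mul]
    refine intervalIntegral_congr_Ioo hL₀.le fun x hx => ?_
    have hx₀ : x ≠ 0 := hx.1.ne'
    simp only [mul_pow, sq_sqrt hx.1.le]
    field_simp
  have henergy : ∫ x in 0..L, (deriv f x * √x) ^ 2 = ∫ x in Ioi 0, x * deriv f x ^ 2 := by
    rw [← intervalIntegral_eq_integral_Ioi hL₀.le
      fun x hx => by rw [(hf_zero x (hL.trans hx)).2, zero_pow two_ne_zero, mul_zero]]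
    refine intervalIntegral_congr_Ioo hL₀.le fun x hx => ?_
    simp only [mul_pow, sq_sqrt hx.1.le, mul_comm]
  calc ∫ x in 0..L, deriv (fun x => f x * √x) x ^ 2
      = ∫ x in 0..L, (deriv f x * √x + f x * (1 / (2 * √x))) ^ 2 :=
        intervalIntegral_congr_Ioo hL₀.le fun x hx => congrArg (· ^ 2)
          ((hderiv x).mul (hasDerivAt_sqrt hx.1.ne')).deriv
    _ = _ := by
        rw [jacobi, hpotential, henergy, (hf_zero L hL).1]
        ring

lemma integral_sq_div_le_integral_sq_div_angularDist (hβ : 1 < β)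
    (hf : Continuous fun x => f x * √x) (hsupp : tsupport f ⊆ Ioc 0 1) :
    ∫ x in Ioi 0, f x ^ 2 / x ≤ ∫ θ in 0..β, (f θ * √θ) ^ 2 / angularDist β θ ^ 2 := by
  have hβ₀ : 0 ≤ β := (one_pos.trans hβ).le
  have hsupp' : tsupport (fun x => f x * √x) ⊆ Ioo 0 β :=
    tsupport_mul_subset_left.trans (hsupp.trans (Ioc_subset_Ioo_right hβ))
  calc ∫ x in Ioi 0, f x ^ 2 / x = ∫ x in 0..β, f x ^ 2 / x :=
        (intervalIntegral_eq_integral_Ioi hβ₀ fun x hx => by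
          rw [image_eq_zero_of_notMem_tsupport fun hmem => (hβ.trans hx).not_ge (hsupp hmem).2,
            zero_pow two_ne_zero, zero_div]).symm
    _ = ∫ x in 0..β, (f x * √x) ^ 2 / x ^ 2 :=
        intervalIntegral_congr_Ioo hβ₀ fun x hx => by
          have hx₀ : x ≠ 0 := hx.1.ne'
          simp only [mul_pow, sq_sqrt hx.1.le]
          field_simp
    _ ≤ ∫ θ in 0..β, (f θ * √θ) ^ 2 / angularDist β θ ^ 2 := by
        refine intervalIntegral.integral_mono_on_of_le_Ioo hβ₀
          (Continuous.intervalIntegrable (continuous_sq_div_sq hf continuous_id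
            fun x hx => (hsupp' hx).1.ne') _ _)
          (Continuous.intervalIntegrable (continuous_sq_div_sq hf
            (continuous_angularDist β) fun x hx => (angularDist_pos (hsupp' hx)).ne') _ _)
          fun x hx => ?_
        have := angularDist_pos hx
        gcongr
        exact angularDist_le hx

lemma AngularHardyInequality.le_quarter (h : AngularHardyInequality β c) (hβ : 1 < β) :
    c ≤ 1 / 4 := by
  by_contra! hlt
  obtain ⟨χ, hχ, hχ_supp, hN, hχ_energy⟩ := exists_bump_of_energy_le (half_pos (sub_pos.2 hlt))
  have hχ₁ : ContDiff ℝ 1 χ := hχ.of_le (by simp)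
  have hφ_supp : tsupport (fun x => χ x * √x) ⊆ Ioo 0 β :=
    tsupport_mul_subset_left.trans (hχ_supp.trans (Ioc_subset_Ioo_right hβ))
  have hφ : ContDiff ℝ 1 fun x => χ x * √x :=
    contDiff_of_forall_mem_tsupport fun x hx =>
      hχ₁.contDiffAt.mul (contDiffAt_sqrt (hφ_supp hx).1.ne')
  have hmain := h _ hφ hφ_supp
  rw [integral_sq_deriv_mul_sqrt hβ hχ₁ hχ_supp] at hmain
  set N := ∫ x in Ioi 0, χ x ^ 2 / x
  have hN_le : N ≤ ∫ θ in 0..β, (χ θ * √θ) ^ 2 / angularDist β θ ^ 2 :=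
    integral_sq_div_le_integral_sq_div_angularDist hβ hφ.continuous hχ_supp
  nlinarith [mul_le_mul_of_nonneg_left hN_le (by linarith : 0 ≤ c)]

end AngularHardyInequality

section PolarCoordinates

variable {r θ : ℝ} {y : E2}

/-- The point of the plane with polar coordinates `(r, θ)`. -/
noncomputable def polarPoint (r θ : ℝ) : E2 := !₂[r * cos θ, r * sin θ]

/-- The polar angle of a point of the plane, normalised to lie in `(0, 2π]`. -/
noncomputable def polarAngle (y : E2) : ℝ :=
  π + Complex.arg (-(Complex.orthonormalBasisOneI.repr.symm y))

@[simp] lemma polarPoint_apply_zero (r θ : ℝ) : polarPoint r θ 0 = r * cos θ := rfl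

@[simp] lemma polarPoint_apply_one (r θ : ℝ) : polarPoint r θ 1 = r * sin θ := rfl

lemma polarPoint_add_pi (r θ : ℝ) :
    polarPoint r (θ + π) =
      Complex.orthonormalBasisOneI.repr (-(Complex.polarCoord.symm (r, θ))) := by
  ext i
  fin_cases i <;> simp [Complex.cos_ofReal_re, Complex.sin_ofReal_re]

lemma norm_polarPoint (hr : 0 ≤ r) (θ : ℝ) : ‖polarPoint r θ‖ = r := by
  rw [← sub_add_cancel θ π, polarPoint_add_pi, LinearIsometryEquiv.norm_map, norm_neg,
    Complex.norm_polarCoord_symm, abs_of_nonneg hr]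

lemma polarAngle_mem_Ioc (y : E2) : polarAngle y ∈ Ioc 0 (2 * π) := by
  have h := Complex.arg_mem_Ioc (-(Complex.orthonormalBasisOneI.repr.symm y))
  exact ⟨by unfold polarAngle; linarith [h.1], by unfold polarAngle; linarith [h.2]⟩

lemma polarAngle_polarPoint (hr : 0 < r) (hθ : θ ∈ Ioc 0 (2 * π)) :
    polarAngle (polarPoint r θ) = θ := by
  rw [← sub_add_cancel θ π, polarPoint_add_pi, polarAngle, LinearIsometryEquiv.symm_apply_apply,
    neg_neg, Complex.polarCoord_symm_apply, Complex.ofReal_cos, Complex.ofReal_sin,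
    Complex.arg_mul_cos_add_sin_mul_I hr ⟨by linarith [hθ.1], by linarith [hθ.2]⟩, add_comm]

lemma polarPoint_norm_polarAngle (y : E2) : polarPoint ‖y‖ (polarAngle y) = y := by
  rw [polarAngle, add_comm, polarPoint_add_pi, Complex.polarCoord_symm_apply,
    ← LinearIsometryEquiv.norm_map Complex.orthonormalBasisOneI.repr.symm, ← norm_neg,
    Complex.ofReal_cos, Complex.ofReal_sin, Complex.norm_mul_cos_add_sin_mul_I, neg_neg,
    LinearIsometryEquiv.apply_symm_apply]

lemma dist_polarPoint_sq (r θ ρ τ : ℝ) :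
    dist (polarPoint r θ) (polarPoint ρ τ) ^ 2 = r ^ 2 + ρ ^ 2 - 2 * r * ρ * cos (τ - θ) := by
  rw [EuclideanSpace.dist_sq_eq, Fin.sum_univ_two]
  simp only [polarPoint_apply_zero, polarPoint_apply_one, Real.dist_eq, sq_abs, cos_sub]
  linear_combination r ^ 2 * sin_sq_add_cos_sq θ + ρ ^ 2 * sin_sq_add_cos_sq τ

lemma contDiff_polarPoint : ContDiff ℝ ∞ fun p : ℝ × ℝ => polarPoint p.1 p.2 := by
  refine contDiff_euclidean.2 fun i => ?_
  fin_cases i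
  · exact contDiff_fst.mul (contDiff_cos.comp contDiff_snd)
  · exact contDiff_fst.mul (contDiff_sin.comp contDiff_snd)

lemma continuous_polarPoint : Continuous fun p : ℝ × ℝ => polarPoint p.1 p.2 :=
  contDiff_polarPoint.continuous

lemma contDiffAt_polarAngle (hy : y ≠ 0) (h : polarAngle y < 2 * π) :
    ContDiffAt ℝ ∞ polarAngle y := by
  let L := Complex.orthonormalBasisOneI.repr.symm
  have hslit : -L y ∈ Complex.slitPlane := by
    rw [Complex.mem_slitPlane_iff_arg]
    refine ⟨fun harg => ?_, by simpa using hy⟩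
    rw [polarAngle, harg] at h
    linarith
  have hlog : ContDiffAt ℝ ∞ (fun y => Complex.log (-L y)) y :=
    ((Complex.contDiffAt_log hslit).restrict_scalars ℝ).comp y L.contDiff.neg.contDiffAt
  have him : ContDiffAt ℝ ∞ (fun y => (Complex.log (-L y)).im) y :=
    Complex.imCLM.contDiff.contDiffAt.comp y hlog
  simp only [Complex.log_im] at him
  exact contDiffAt_const.add him

lemma hasDerivAt_finTwo {f g : ℝ → ℝ} {f' g' x : ℝ} (hf : HasDerivAt f f' x)
    (hg : HasDerivAt g g' x) : HasDerivAt (fun t => (!₂[f t, g t] : E2)) !₂[f', g'] x := by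
  have h : HasDerivAt (fun t => ![f t, g t]) ![f', g'] x := hasDerivAt_pi.2 fun i => by
    fin_cases i
    exacts [hf, hg]
  exact (PiLp.hasFDerivAt_toLp (𝕜 := ℝ) 2 ![f x, g x]).comp_hasDerivAt x h

lemma norm_gradient_polarPoint_sq {u : E2 → ℝ} {a b : ℝ} (hr : r ≠ 0)
    (hu : DifferentiableAt ℝ u (polarPoint r θ))
    (ha : HasDerivAt (fun r => u (polarPoint r θ)) a r)
    (hb : HasDerivAt (fun θ => u (polarPoint r θ)) b θ) :
    ‖gradient u (polarPoint r θ)‖ ^ 2 = a ^ 2 + b ^ 2 / r ^ 2 := by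
  have hg := hu.hasGradientAt.hasFDerivAt
  generalize gradient u (polarPoint r θ) = g at hg ⊢
  have ha' : a = g 0 * cos θ + g 1 * sin θ := by
    rw [ha.unique (hg.comp_hasDerivAt r (hasDerivAt_finTwo ((hasDerivAt_id r).mul_const (cos θ))
      ((hasDerivAt_id r).mul_const (sin θ))))]
    simp [PiLp.inner_apply, mul_comm]
  have hb' : b = r * (g 1 * cos θ - g 0 * sin θ) := by
    rw [hb.unique (hg.comp_hasDerivAt θ (hasDerivAt_finTwo ((hasDerivAt_cos θ).const_mul r)
      ((hasDerivAt_sin θ).const_mul r)))]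
    simp only [InnerProductSpace.toDual_apply_apply, PiLp.inner_apply, Fin.sum_univ_two,
      RCLike.inner_apply, conj_trivial, Matrix.cons_val_zero, Matrix.cons_val_one]
    ring
  rw [EuclideanSpace.norm_sq_eq, Fin.sum_univ_two, Real.norm_eq_abs, Real.norm_eq_abs, sq_abs,
    sq_abs, ha', hb', mul_pow, mul_div_cancel_left₀ _ (pow_ne_zero 2 hr)]
  linear_combination (-(g 0 ^ 2 + g 1 ^ 2)) * sin_sq_add_cos_sq θ

end PolarCoordinates

section Sector

variable {r θ β : ℝ} {y : E2}

lemma polarPoint_mem_sector (hr : 0 < r) (hθ : θ ∈ Ioo 0 β) : polarPoint r θ ∈ sector β :=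
  ⟨r, θ, hr, hθ.1, hθ.2, rfl, rfl⟩

lemma mem_sector_iff (hβ : β ≤ 2 * π) : y ∈ sector β ↔ y ≠ 0 ∧ polarAngle y < β := by
  constructor
  · rintro ⟨r, θ, hr, h0, h1, e0, e1⟩
    obtain rfl : y = polarPoint r θ := by
      ext i
      fin_cases i
      exacts [e0, e1]
    rw [← norm_pos_iff, norm_polarPoint hr.le, polarAngle_polarPoint hr ⟨h0, by linarith⟩]
    exact ⟨hr, h1⟩
  · rintro ⟨h0, h1⟩
    rw [← polarPoint_norm_polarAngle y]
    exact polarPoint_mem_sector (norm_pos_iff.2 h0) ⟨(polarAngle_mem_Ioc y).1, h1⟩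

lemma isOpen_sector (hβ : β ≤ 2 * π) : IsOpen (sector β) := by
  refine isOpen_iff_mem_nhds.2 fun y hy => ?_
  obtain ⟨hy0, hyβ⟩ := (mem_sector_iff hβ).1 hy
  filter_upwards [isOpen_ne.mem_nhds hy0,
    (contDiffAt_polarAngle hy0 (hyβ.trans_le hβ)).continuousAt.eventually_lt_const hyβ]
    with z hz0 hzβ using (mem_sector_iff hβ).2 ⟨hz0, hzβ⟩

lemma polarPoint_mem_closure_sector (hβ : 0 < β) (hr : 0 ≤ r) (hθ : θ ∈ Icc 0 β) :
    polarPoint r θ ∈ closure (sector β) := by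
  have h : (r, θ) ∈ closure (Ioi (0 : ℝ) ×ˢ Ioo 0 β) := by
    rw [closure_prod_eq, closure_Ioi, closure_Ioo hβ.ne]
    exact ⟨hr, hθ⟩
  refine closure_mono ?_ (image_closure_subset_closure_image continuous_polarPoint ⟨_, h, rfl⟩)
  rintro _ ⟨p, hp, rfl⟩
  exact polarPoint_mem_sector hp.1 hp.2

lemma polarPoint_mem_frontier_sector (hβ : β ∈ Ioc 0 (2 * π)) (hr : 0 ≤ r) :
    polarPoint r β ∈ frontier (sector β) := by
  rw [(isOpen_sector hβ.2).frontier_eq]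
  refine ⟨polarPoint_mem_closure_sector hβ.1 hr ⟨hβ.1.le, le_rfl⟩, fun h => ?_⟩
  obtain ⟨h0, h1⟩ := (mem_sector_iff hβ.2).1 h
  rw [← norm_pos_iff, norm_polarPoint hr] at h0
  exact h1.ne (polarAngle_polarPoint h0 hβ)

lemma polarPoint_zero_mem_frontier_sector (hβ : β ∈ Ioc 0 (2 * π)) (hr : 0 ≤ r) :
    polarPoint r 0 ∈ frontier (sector β) := by
  rw [(isOpen_sector hβ.2).frontier_eq]
  refine ⟨polarPoint_mem_closure_sector hβ.1 hr ⟨le_rfl, hβ.1.le⟩, fun h => ?_⟩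
  obtain ⟨h0, h1⟩ := (mem_sector_iff hβ.2).1 h
  have heq : polarPoint r 0 = polarPoint r (2 * π) := by simp [polarPoint]
  rw [← norm_pos_iff, norm_polarPoint hr] at h0
  rw [heq, polarAngle_polarPoint h0 ⟨two_pi_pos, le_rfl⟩] at h1
  exact hβ.2.not_gt h1

lemma exists_polarPoint_eq_of_notMem_sector (hβ : β ≤ 2 * π) (hy : y ∉ sector β) :
    ∃ ρ ≥ 0, ∃ τ ∈ Icc β (2 * π), polarPoint ρ τ = y := by
  rcases eq_or_ne y 0 with rfl | h0
  · exact ⟨0, le_rfl, β, ⟨le_rfl, hβ⟩, by ext i; fin_cases i <;> simp⟩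
  · exact ⟨‖y‖, norm_nonneg y, polarAngle y,
      ⟨not_lt.1 fun h => hy ((mem_sector_iff hβ).2 ⟨h0, h⟩), (polarAngle_mem_Ioc y).2⟩,
      polarPoint_norm_polarAngle y⟩

lemma sq_mul_sin_sq_le (r ρ m : ℝ) :
    (r * sin m) ^ 2 ≤ r ^ 2 + ρ ^ 2 - 2 * r * ρ * cos m := by
  nlinarith [sin_sq_add_cos_sq m, sq_nonneg (ρ - r * cos m),
    congrArg (r ^ 2 * ·) (sin_sq_add_cos_sq m)]

lemma cos_sub_le_cos_min {τ : ℝ} (hθ : θ ∈ Ioo 0 β) (hτ : τ ∈ Icc β (2 * π)) :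
    cos (τ - θ) ≤ cos (min (min θ (β - θ)) (π / 2)) := by
  obtain ⟨hθ0, hθβ⟩ := hθ
  obtain ⟨hτβ, hτ2⟩ := hτ
  have hm0 : 0 ≤ min (min θ (β - θ)) (π / 2) :=
    le_min (le_min hθ0.le (by linarith)) pi_div_two_pos.le
  rcases le_total (τ - θ) π with h | h
  · refine cos_le_cos_of_nonneg_of_le_pi hm0 h ?_
    linarith [min_le_left (min θ (β - θ)) (π / 2), min_le_right θ (β - θ)]
  · rw [← cos_two_pi_sub]
    refine cos_le_cos_of_nonneg_of_le_pi hm0 (by linarith) ?_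
    linarith [min_le_left (min θ (β - θ)) (π / 2), min_le_left θ (β - θ)]

lemma exists_mem_frontier_sector_dist_eq (hβ : β ∈ Ioc 0 (2 * π)) (hr : 0 ≤ r)
    (hθ : θ ∈ Ioo 0 β) :
    ∃ z ∈ frontier (sector β), dist (polarPoint r θ) z = r * angularDist β θ := by
  obtain ⟨m, hm⟩ : ∃ m, m = min (min θ (β - θ)) (π / 2) := ⟨_, rfl⟩
  have hcos : 0 ≤ r * cos m := by
    refine mul_nonneg hr (cos_nonneg_of_neg_pi_div_two_le_of_le ?_ (hm ▸ min_le_right _ _))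
    exact hm ▸ le_min (le_min (by linarith [pi_pos, hθ.1]) (by linarith [pi_pos, hθ.2]))
      (by linarith [pi_pos])
  -- The nearest boundary point is the orthogonal projection onto the nearer side, or the vertex.
  obtain ⟨τ, hτ, hcosτ⟩ : ∃ τ, polarPoint (r * cos m) τ ∈ frontier (sector β) ∧
      cos m * cos (τ - θ) = cos m ^ 2 := by
    rcases min_choice (min θ (β - θ)) (π / 2) with h | h
    · rcases min_choice θ (β - θ) with h' | h' <;> rw [h'] at h hm <;> rw [h] at hm
      · exact ⟨0, polarPoint_zero_mem_frontier_sector hβ hcos, by rw [hm, zero_sub, cos_neg, sq]⟩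
      · exact ⟨β, polarPoint_mem_frontier_sector hβ hcos, by rw [hm, sq]⟩
    · exact ⟨β, polarPoint_mem_frontier_sector hβ hcos, by rw [hm, h, cos_pi_div_two]; ring⟩
  refine ⟨_, hτ, (pow_left_inj₀ dist_nonneg
    (mul_nonneg hr (angularDist_pos hθ).le) two_ne_zero).1 ?_⟩
  rw [dist_polarPoint_sq, angularDist, ← hm]
  linear_combination (-(2 * r ^ 2)) * hcosτ - r ^ 2 * sin_sq_add_cos_sq m

lemma infDist_polarPoint_frontier_sector (hβ : β ∈ Ioc 0 (2 * π)) (hr : 0 ≤ r)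
    (hθ : θ ∈ Ioo 0 β) :
    Metric.infDist (polarPoint r θ) (frontier (sector β)) = r * angularDist β θ := by
  obtain ⟨z, hz, hdist⟩ := exists_mem_frontier_sector_dist_eq hβ hr hθ
  refine le_antisymm (hdist ▸ Metric.infDist_le_dist_of_mem hz)
    ((Metric.le_infDist ⟨z, hz⟩).2 fun y hy => ?_)
  rw [(isOpen_sector hβ.2).frontier_eq] at hy
  obtain ⟨ρ, hρ, τ, hτ, rfl⟩ := exists_polarPoint_eq_of_notMem_sector hβ.2 hy.2
  refine le_of_sq_le_sq ?_ dist_nonneg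
  rw [dist_polarPoint_sq]
  calc (r * angularDist β θ) ^ 2
      ≤ r ^ 2 + ρ ^ 2 - 2 * r * ρ * cos (min (min θ (β - θ)) (π / 2)) := sq_mul_sin_sq_le _ _ _
    _ ≤ r ^ 2 + ρ ^ 2 - 2 * r * ρ * cos (τ - θ) := by
        gcongr
        exact cos_sub_le_cos_min hθ hτ

lemma integral_eq_integral_polarPoint (F : E2 → ℝ) :
    ∫ y, F y = ∫ p in Ioi (0 : ℝ) ×ˢ Ioo 0 (2 * π), p.1 * F (polarPoint p.1 p.2) := by
  let L : ℂ ≃ₗᵢ[ℝ] E2 := (LinearIsometryEquiv.neg ℝ).trans Complex.orthonormalBasisOneI.repr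
  have hshift : MeasurePreserving (Prod.map id (· + π) : ℝ × ℝ → ℝ × ℝ) volume volume :=
    (MeasurePreserving.id _).prod (measurePreserving_add_right volume π)
  have hemb : MeasurableEmbedding (Prod.map id (· + π) : ℝ × ℝ → ℝ × ℝ) :=
    MeasurableEmbedding.id.prodMap (MeasurableEquiv.addRight π).measurableEmbedding
  have htarget : Prod.map id (· + π) ⁻¹' (Ioi (0 : ℝ) ×ˢ Ioo 0 (2 * π)) = polarCoord.target := by
    ext p
    simp only [mem_preimage, mem_prod, Prod.map_fst, Prod.map_snd, id, mem_Ioo, polarCoord_target]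
    constructor <;> rintro ⟨h, h1, h2⟩ <;> exact ⟨h, by linarith, by linarith⟩
  rw [← L.measurePreserving.integral_comp L.toHomeomorph.measurableEmbedding,
    ← Complex.integral_comp_polarCoord_symm, ← htarget,
    ← hshift.setIntegral_preimage_emb hemb (fun p => p.1 * F (polarPoint p.1 p.2))]
  simp only [Prod.map_fst, Prod.map_snd, id, polarPoint_add_pi, smul_eq_mul]
  rfl

lemma setIntegral_sector (hβ : β ≤ 2 * π) (F : E2 → ℝ) :
    ∫ y in sector β, F y =
      ∫ p in Ioi (0 : ℝ) ×ˢ Ioo 0 β, p.1 * F (polarPoint p.1 p.2) := by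
  have hsub : Ioi (0 : ℝ) ×ˢ Ioo 0 β ⊆ Ioi (0 : ℝ) ×ˢ Ioo 0 (2 * π) :=
    prod_mono_right (Ioo_subset_Ioo_right hβ)
  rw [← integral_indicator (isOpen_sector hβ).measurableSet, integral_eq_integral_polarPoint,
    setIntegral_eq_of_subset_of_forall_sdiff_eq_zero
      (measurableSet_Ioi.prod measurableSet_Ioo) hsub]
  · refine setIntegral_congr_fun (measurableSet_Ioi.prod measurableSet_Ioo) fun p hp => ?_
    simp only [indicator_of_mem (polarPoint_mem_sector hp.1 hp.2)]
  · rintro p ⟨⟨hr, h0, h2⟩, hp⟩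
    rw [indicator_of_notMem, mul_zero]
    rw [mem_sector_iff hβ, polarAngle_polarPoint hr ⟨h0, h2.le⟩]
    exact fun h => hp ⟨hr, h0, h.2⟩

end Sector

section RadialSlicing

variable {r β c : ℝ} {F u : E2 → ℝ}

/-- The Hardy inequality on the sector of angle `β` with constant `c`, for the distance to the
boundary of the sector. -/
def SectorHardyInequality (β c : ℝ) : Prop :=
  ∀ u : E2 → ℝ, ContDiff ℝ ∞ u → HasCompactSupport u → tsupport u ⊆ sector β →
    c * ∫ x in sector β, (u x) ^ 2 / (Metric.infDist x (frontier (sector β))) ^ 2 ≤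
      ∫ x in sector β, ‖gradient u x‖ ^ 2

lemma continuous_polarPoint_right (r : ℝ) : Continuous (polarPoint r) :=
  continuous_polarPoint.comp (Continuous.prodMk_right r)

lemma integrableOn_mul_polarPoint (hF : Continuous F) (hFc : HasCompactSupport F) (β : ℝ) :
    IntegrableOn (fun p : ℝ × ℝ => p.1 * F (polarPoint p.1 p.2)) (Ioi 0 ×ˢ Ioo 0 β) := by
  obtain ⟨R, hR⟩ := hFc.isCompact.isBounded.exists_norm_le
  have hcont : Continuous fun p : ℝ × ℝ => p.1 * F (polarPoint p.1 p.2) :=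
    continuous_fst.mul (hF.comp continuous_polarPoint)
  refine (hcont.continuousOn.integrableOn_compact
    (isCompact_Icc (a := (0 : ℝ)) (b := R) |>.prod (isCompact_Icc (a := 0) (b := β)))
    ).of_forall_sdiff_eq_zero (measurableSet_Ioi.prod measurableSet_Ioo) ?_
  rintro p ⟨⟨hr, hθ⟩, hp⟩
  refine mul_eq_zero_of_right _ (image_eq_zero_of_notMem_tsupport fun h => hp ?_)
  exact ⟨⟨hr.le, norm_polarPoint hr.le p.2 ▸ hR _ h⟩, Ioo_subset_Icc_self hθ⟩

lemma setIntegral_Ioo_mul (hβ : 0 ≤ β) (r : ℝ) (g : ℝ → ℝ) :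
    ∫ θ in Ioo 0 β, r * g θ = r * ∫ θ in 0..β, g θ := by
  rw [integral_const_mul, intervalIntegral.integral_of_le hβ, integral_Ioc_eq_integral_Ioo]

lemma integrableOn_mul_integral_polarPoint (hβ : 0 ≤ β) (hF : Continuous F)
    (hFc : HasCompactSupport F) :
    IntegrableOn (fun r => r * ∫ θ in 0..β, F (polarPoint r θ)) (Ioi 0) := by
  have h := integrableOn_mul_polarPoint hF hFc β
  rw [IntegrableOn, Measure.volume_eq_prod, ← Measure.prod_restrict] at h
  rw [IntegrableOn]
  simpa only [setIntegral_Ioo_mul hβ] using h.integral_prod_left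

lemma setIntegral_sector_eq_integral_integral (hβ : β ∈ Ioc 0 (2 * π)) (hF : Continuous F)
    (hFc : HasCompactSupport F) :
    ∫ y in sector β, F y = ∫ r in Ioi 0, r * ∫ θ in 0..β, F (polarPoint r θ) := by
  have h := integrableOn_mul_polarPoint hF hFc β
  rw [Measure.volume_eq_prod] at h
  rw [setIntegral_sector hβ.2, Measure.volume_eq_prod, setIntegral_prod _ h]
  simp only [setIntegral_Ioo_mul hβ.1.le]

lemma infDist_frontier_sector_pos (hβ : β ∈ Ioc 0 (2 * π)) {y : E2} (hy : y ∈ sector β) :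
    0 < Metric.infDist y (frontier (sector β)) := by
  obtain ⟨h0, h1⟩ := (mem_sector_iff hβ.2).1 hy
  have hθ : polarAngle y ∈ Ioo 0 β := ⟨(polarAngle_mem_Ioc y).1, h1⟩
  rw [← polarPoint_norm_polarAngle y, infDist_polarPoint_frontier_sector hβ (norm_nonneg y) hθ]
  exact mul_pos (norm_pos_iff.2 h0) (angularDist_pos hθ)

lemma continuous_sq_div_infDist_sq (hβ : β ∈ Ioc 0 (2 * π)) (hu : Continuous u)
    (hsupp : tsupport u ⊆ sector β) :
    Continuous fun x => u x ^ 2 / Metric.infDist x (frontier (sector β)) ^ 2 :=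
  continuous_sq_div_sq hu (Metric.continuous_infDist_pt _)
    fun _ hx => (infDist_frontier_sector_pos hβ (hsupp hx)).ne'

lemma hasCompactSupport_sq_div_sq {X : Type*} [TopologicalSpace X] {f : X → ℝ}
    (hf : HasCompactSupport f) (w : X → ℝ) : HasCompactSupport fun x => f x ^ 2 / w x ^ 2 :=
  hf.mono fun x (hx : f x ^ 2 / w x ^ 2 ≠ 0) (hfx : f x = 0) => hx (by simp [hfx])

lemma continuous_norm_gradient_sq (hu : ContDiff ℝ 1 u) :
    Continuous fun x => ‖gradient u x‖ ^ 2 := by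
  unfold gradient
  have := hu.continuous_fderiv one_ne_zero
  fun_prop

lemma hasCompactSupport_norm_gradient_sq (hu : HasCompactSupport u) :
    HasCompactSupport fun x => ‖gradient u x‖ ^ 2 :=
  (hu.fderiv ℝ).comp_left (g := fun l => ‖(InnerProductSpace.toDual ℝ E2).symm l‖ ^ 2) (by simp)

lemma tsupport_indicator_polarPoint_subset (hβ : β ≤ 2 * π) (hr : 0 < r)
    (hc : HasCompactSupport u) (hsupp : tsupport u ⊆ sector β) :
    tsupport ((Ioo 0 β).indicator fun θ => u (polarPoint r θ)) ⊆ Ioo 0 β := by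
  have hcont : ContinuousOn polarAngle (tsupport u) := fun y hy => by
    obtain ⟨h0, h1⟩ := (mem_sector_iff hβ).1 (hsupp hy)
    exact (contDiffAt_polarAngle h0 (h1.trans_le hβ)).continuousAt.continuousWithinAt
  have hK : polarAngle '' tsupport u ⊆ Ioo 0 β := by
    rintro _ ⟨y, hy, rfl⟩
    exact ⟨(polarAngle_mem_Ioc y).1, ((mem_sector_iff hβ).1 (hsupp hy)).2⟩
  refine (closure_minimal (fun θ hθ => ?_)
    (hc.isCompact.image_of_continuousOn hcont).isClosed).trans hK
  obtain ⟨hθβ, hu⟩ := indicator_apply_ne_zero.1 hθ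
  exact ⟨_, subset_tsupport u hu, polarAngle_polarPoint hr ⟨hθβ.1, hθβ.2.le.trans hβ⟩⟩

lemma sq_deriv_polarPoint_le {θ : ℝ} (hr : 0 < r) (hu : Differentiable ℝ u) :
    deriv (fun θ => u (polarPoint r θ)) θ ^ 2 ≤ r ^ 2 * ‖gradient u (polarPoint r θ)‖ ^ 2 := by
  have hv : Differentiable ℝ fun p : ℝ × ℝ => u (polarPoint p.1 p.2) :=
    hu.comp (contDiff_polarPoint.differentiable (by simp))
  have hdr : DifferentiableAt ℝ (fun r => u (polarPoint r θ)) r :=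
    hv.comp (differentiable_id.prodMk (differentiable_const θ)) r
  have hdθ : DifferentiableAt ℝ (fun θ => u (polarPoint r θ)) θ :=
    hv.comp ((differentiable_const r).prodMk differentiable_id) θ
  rw [norm_gradient_polarPoint_sq hr.ne' (hu _) hdr.hasDerivAt hdθ.hasDerivAt, mul_add,
    mul_div_cancel₀ _ (pow_ne_zero 2 hr.ne')]
  exact le_add_of_nonneg_left (by positivity)

lemma AngularHardyInequality.slice (h : AngularHardyInequality β c) (hβ : β ∈ Ioc 0 (2 * π))
    (hr : 0 < r) (hu : ContDiff ℝ 1 u) (hc : HasCompactSupport u) (hsupp : tsupport u ⊆ sector β) :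
    c * ∫ θ in 0..β, u (polarPoint r θ) ^ 2 /
        Metric.infDist (polarPoint r θ) (frontier (sector β)) ^ 2 ≤
      ∫ θ in 0..β, ‖gradient u (polarPoint r θ)‖ ^ 2 := by
  -- Extending by zero matters: for `β = 2 * π` the function `θ ↦ u (polarPoint r θ)` is periodic.
  set φ := (Ioo 0 β).indicator fun θ => u (polarPoint r θ)
  have hφ_eq : EqOn φ (fun θ => u (polarPoint r θ)) (Ioo 0 β) := fun θ hθ =>
    indicator_of_mem hθ _
  have hφ_supp := tsupport_indicator_polarPoint_subset hβ.2 hr hc hsupp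
  have hv : ContDiff ℝ 1 fun θ => u (polarPoint r θ) :=
    hu.comp ((contDiff_polarPoint.of_le (by simp)).comp (contDiff_const.prodMk contDiff_id))
  have hφ : ContDiff ℝ 1 φ := contDiff_of_forall_mem_tsupport fun θ hθ =>
    hv.contDiffAt.congr_of_eventuallyEq
      (hφ_eq.eventuallyEq_of_mem (isOpen_Ioo.mem_nhds (hφ_supp hθ)))
  have hφ_deriv : EqOn (deriv φ) (deriv fun θ => u (polarPoint r θ)) (Ioo 0 β) :=
    hφ_eq.deriv isOpen_Ioo
  have hgrad : Continuous fun θ => ‖gradient u (polarPoint r θ)‖ ^ 2 :=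
    (continuous_norm_gradient_sq hu).comp (continuous_polarPoint_right r)
  have hmass : ∫ θ in 0..β, φ θ ^ 2 / angularDist β θ ^ 2 =
      r ^ 2 * ∫ θ in 0..β, u (polarPoint r θ) ^ 2 /
        Metric.infDist (polarPoint r θ) (frontier (sector β)) ^ 2 := by
    rw [← intervalIntegral.integral_const_mul]
    refine intervalIntegral_congr_Ioo hβ.1.le fun θ hθ => ?_
    simp only [hφ_eq hθ, infDist_polarPoint_frontier_sector hβ hr.le hθ]
    rw [mul_pow, mul_div_assoc', mul_div_mul_left _ _ (pow_ne_zero 2 hr.ne')]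
  refine le_of_mul_le_mul_left ?_ (pow_pos hr 2)
  calc r ^ 2 * (c * ∫ θ in 0..β, u (polarPoint r θ) ^ 2 /
        Metric.infDist (polarPoint r θ) (frontier (sector β)) ^ 2)
      = c * ∫ θ in 0..β, φ θ ^ 2 / angularDist β θ ^ 2 := by rw [hmass]; ring
    _ ≤ ∫ θ in 0..β, deriv φ θ ^ 2 := h φ hφ hφ_supp
    _ ≤ ∫ θ in 0..β, r ^ 2 * ‖gradient u (polarPoint r θ)‖ ^ 2 := by
        refine intervalIntegral.integral_mono_on_of_le_Ioo hβ.1.le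
          (((hφ.continuous_deriv le_rfl).pow 2).intervalIntegrable _ _)
          ((hgrad.const_mul _).intervalIntegrable _ _) fun θ hθ => ?_
        rw [hφ_deriv hθ]
        exact sq_deriv_polarPoint_le hr (hu.differentiable one_ne_zero)
    _ = r ^ 2 * ∫ θ in 0..β, ‖gradient u (polarPoint r θ)‖ ^ 2 :=
        intervalIntegral.integral_const_mul _ _

lemma AngularHardyInequality.sectorHardyInequality (h : AngularHardyInequality β c)
    (hβ : β ∈ Ioc 0 (2 * π)) : SectorHardyInequality β c := by
  intro u hu hc hsupp
  have hu1 : ContDiff ℝ 1 u := hu.of_le (by simp)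
  have hmass := continuous_sq_div_infDist_sq hβ hu.continuous hsupp
  have hmass_c := hasCompactSupport_sq_div_sq hc fun x => Metric.infDist x (frontier (sector β))
  have henergy := continuous_norm_gradient_sq hu1
  have henergy_c := hasCompactSupport_norm_gradient_sq hc
  rw [setIntegral_sector_eq_integral_integral hβ hmass hmass_c,
    setIntegral_sector_eq_integral_integral hβ henergy henergy_c, ← integral_const_mul]
  refine setIntegral_mono_on
    ((integrableOn_mul_integral_polarPoint hβ.1.le hmass hmass_c).const_mul c)
    (integrableOn_mul_integral_polarPoint hβ.1.le henergy henergy_c) measurableSet_Ioi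
    fun r hr => ?_
  rw [mul_left_comm]
  exact mul_le_mul_of_nonneg_left (h.slice hβ hr hu1 hc hsupp) hr.le

end RadialSlicing

section SeparatedTestFunctions

variable {r θ β c : ℝ} {χ φ : ℝ → ℝ}

/-- The function on the plane separated in polar coordinates, with radial factor `χ` and angular
factor `φ`. -/
noncomputable def polarProduct (χ φ : ℝ → ℝ) (y : E2) : ℝ := χ ‖y‖ * φ (polarAngle y)

lemma polarProduct_polarPoint (χ φ : ℝ → ℝ) (hr : 0 < r) (hθ : θ ∈ Ioc 0 (2 * π)) :
    polarProduct χ φ (polarPoint r θ) = χ r * φ θ := by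
  rw [polarProduct, norm_polarPoint hr.le, polarAngle_polarPoint hr hθ]

lemma support_polarProduct_subset (χ φ : ℝ → ℝ) :
    Function.support (polarProduct χ φ) ⊆
      (fun p : ℝ × ℝ => polarPoint p.1 p.2) '' (tsupport χ ×ˢ tsupport φ) := fun y hy =>
  ⟨(‖y‖, polarAngle y), ⟨subset_tsupport χ (left_ne_zero_of_mul hy),
    subset_tsupport φ (right_ne_zero_of_mul hy)⟩, polarPoint_norm_polarAngle y⟩

lemma isCompact_image_polarPoint (hχ : HasCompactSupport χ) (hφ : HasCompactSupport φ) :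
    IsCompact ((fun p : ℝ × ℝ => polarPoint p.1 p.2) '' (tsupport χ ×ˢ tsupport φ)) :=
  (hχ.isCompact.prod hφ.isCompact).image continuous_polarPoint

lemma hasCompactSupport_polarProduct (hχ : HasCompactSupport χ) (hφ : HasCompactSupport φ) :
    HasCompactSupport (polarProduct χ φ) :=
  .of_support_subset_isCompact (isCompact_image_polarPoint hχ hφ)
    (support_polarProduct_subset χ φ)

lemma tsupport_polarProduct_subset (hχ : HasCompactSupport χ) (hφ : HasCompactSupport φ)
    (hχ_supp : tsupport χ ⊆ Ioi 0) (hφ_supp : tsupport φ ⊆ Ioo 0 β) :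
    tsupport (polarProduct χ φ) ⊆ sector β := by
  refine (closure_minimal (support_polarProduct_subset χ φ)
    (isCompact_image_polarPoint hχ hφ).isClosed).trans ?_
  rintro _ ⟨p, ⟨hr, hθ⟩, rfl⟩
  exact polarPoint_mem_sector (hχ_supp hr) (hφ_supp hθ)

lemma contDiff_polarProduct (hχ : ContDiff ℝ ∞ χ) (hφ : ContDiff ℝ ∞ φ) (hβ : β ≤ 2 * π)
    (hsupp : tsupport (polarProduct χ φ) ⊆ sector β) : ContDiff ℝ ∞ (polarProduct χ φ) := by
  refine contDiff_of_forall_mem_tsupport fun y hy => ?_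
  obtain ⟨h0, h1⟩ := (mem_sector_iff hβ).1 (hsupp hy)
  exact (hχ.contDiffAt.comp y (contDiffAt_norm ℝ h0)).mul
    (hφ.contDiffAt.comp y (contDiffAt_polarAngle h0 (h1.trans_le hβ)))

lemma norm_gradient_polarProduct_sq (hχ : Differentiable ℝ χ) (hφ : Differentiable ℝ φ)
    (hr : 0 < r) (hθ : θ ∈ Ioo 0 (2 * π)) :
    ‖gradient (polarProduct χ φ) (polarPoint r θ)‖ ^ 2 =
      (deriv χ r * φ θ) ^ 2 + (χ r * deriv φ θ) ^ 2 / r ^ 2 := by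
  have hθ' : θ ∈ Ioc 0 (2 * π) := Ioo_subset_Ioc_self hθ
  have h0 : polarPoint r θ ≠ 0 := by rwa [← norm_pos_iff, norm_polarPoint hr.le]
  have h1 : polarAngle (polarPoint r θ) < 2 * π := by
    rw [polarAngle_polarPoint hr hθ']
    exact hθ.2
  refine norm_gradient_polarPoint_sq hr.ne' ?_ ?_ ?_
  · exact ((hχ _).comp _ ((contDiffAt_norm ℝ h0 (n := ∞)).differentiableAt (by simp))).mul
      ((hφ _).comp _ ((contDiffAt_polarAngle h0 h1).differentiableAt (by simp)))
  · refine ((hχ r).hasDerivAt.mul_const (φ θ)).congr_of_eventuallyEq ?_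
    filter_upwards [Ioi_mem_nhds hr] with ρ hρ using polarProduct_polarPoint χ φ hρ hθ'
  · refine ((hφ θ).hasDerivAt.const_mul (χ r)).congr_of_eventuallyEq ?_
    filter_upwards [isOpen_Ioo.mem_nhds hθ] with τ hτ
      using polarProduct_polarPoint χ φ hr (Ioo_subset_Ioc_self hτ)

lemma setIntegral_polarProduct_sq_div_infDist_sq (hβ : β ∈ Ioc 0 (2 * π))
    (hu : Continuous (polarProduct χ φ)) (hc : HasCompactSupport (polarProduct χ φ))
    (hsupp : tsupport (polarProduct χ φ) ⊆ sector β) :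
    ∫ x in sector β, polarProduct χ φ x ^ 2 / Metric.infDist x (frontier (sector β)) ^ 2 =
      (∫ r in Ioi 0, χ r ^ 2 / r) * ∫ θ in 0..β, φ θ ^ 2 / angularDist β θ ^ 2 := by
  rw [setIntegral_sector_eq_integral_integral hβ (continuous_sq_div_infDist_sq hβ hu hsupp)
    (hasCompactSupport_sq_div_sq hc _), ← integral_mul_const]
  refine setIntegral_congr_fun measurableSet_Ioi fun r (hr : 0 < r) => ?_
  simp only [← intervalIntegral.integral_const_mul]
  refine intervalIntegral_congr_Ioo hβ.1.le fun θ hθ => ?_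
  simp only [infDist_polarPoint_frontier_sector hβ hr.le hθ,
    polarProduct_polarPoint χ φ hr ⟨hθ.1, hθ.2.le.trans hβ.2⟩]
  have := (angularDist_pos hθ).ne'
  field_simp

lemma integral_norm_gradient_polarProduct_sq (hβ : β ∈ Ioc 0 (2 * π)) (hχ : Differentiable ℝ χ)
    (hφ : ContDiff ℝ 1 φ) (hr : 0 < r) :
    r * ∫ θ in 0..β, ‖gradient (polarProduct χ φ) (polarPoint r θ)‖ ^ 2 =
      r * deriv χ r ^ 2 * (∫ θ in 0..β, φ θ ^ 2) +
        χ r ^ 2 / r * ∫ θ in 0..β, deriv φ θ ^ 2 := by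
  have hφ₀ := hφ.continuous
  have := hφ.continuous_deriv le_rfl
  simp only [← intervalIntegral.integral_const_mul]
  rw [← intervalIntegral.integral_add (Continuous.intervalIntegrable (by fun_prop) _ _)
    (Continuous.intervalIntegrable (by fun_prop) _ _)]
  refine intervalIntegral_congr_Ioo hβ.1.le fun θ hθ => ?_
  simp only [norm_gradient_polarProduct_sq hχ (hφ.differentiable one_ne_zero) hr
    ⟨hθ.1, hθ.2.trans_le hβ.2⟩]
  field_simp

lemma setIntegral_norm_gradient_polarProduct_sq (hβ : β ∈ Ioc 0 (2 * π)) (hχ : ContDiff ℝ 1 χ)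
    (hχ_c : HasCompactSupport χ) (hφ : ContDiff ℝ 1 φ) (hu : ContDiff ℝ 1 (polarProduct χ φ))
    (hc : HasCompactSupport (polarProduct χ φ))
    (hint : IntegrableOn (fun r => χ r ^ 2 / r) (Ioi 0)) :
    ∫ x in sector β, ‖gradient (polarProduct χ φ) x‖ ^ 2 =
      (∫ r in Ioi 0, r * deriv χ r ^ 2) * (∫ θ in 0..β, φ θ ^ 2) +
        (∫ r in Ioi 0, χ r ^ 2 / r) * ∫ θ in 0..β, deriv φ θ ^ 2 := by
  have hcont : Continuous fun r => r * deriv χ r ^ 2 :=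
    continuous_id.mul ((hχ.continuous_deriv le_rfl).pow 2)
  have hsupp : HasCompactSupport fun r => r * deriv χ r ^ 2 :=
    hχ_c.deriv.mono fun r hr h => hr (by simp [h])
  have hχ' := hcont.integrable_of_hasCompactSupport (μ := volume) hsupp
  rw [setIntegral_sector_eq_integral_integral hβ (continuous_norm_gradient_sq hu)
    (hasCompactSupport_norm_gradient_sq hc), ← integral_mul_const, ← integral_mul_const,
    ← integral_add (hχ'.integrableOn.mul_const _) (hint.mul_const _)]
  exact setIntegral_congr_fun measurableSet_Ioi fun r hr =>
    integral_norm_gradient_polarProduct_sq hβ (hχ.differentiable one_ne_zero) hφ hr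

lemma SectorHardyInequality.angular_of_contDiff_infty (h : SectorHardyInequality β c)
    (hβ : β ∈ Ioc 0 (2 * π)) (hφ : ContDiff ℝ ∞ φ) (hsupp : tsupport φ ⊆ Ioo 0 β) :
    c * ∫ θ in 0..β, φ θ ^ 2 / angularDist β θ ^ 2 ≤ ∫ θ in 0..β, deriv φ θ ^ 2 := by
  have hφ_c : HasCompactSupport φ :=
    .of_support_subset_isCompact isCompact_Icc
      ((subset_tsupport φ).trans (hsupp.trans Ioo_subset_Icc_self))
  have happrox (ε : ℝ) (hε : 0 < ε) : c * ∫ θ in 0..β, φ θ ^ 2 / angularDist β θ ^ 2 ≤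
      (∫ θ in 0..β, deriv φ θ ^ 2) + ε * ∫ θ in 0..β, φ θ ^ 2 := by
    obtain ⟨χ, hχ, hχ_supp, hpos, henergy⟩ := exists_bump_of_energy_le hε
    have hχ_c : HasCompactSupport χ := .of_support_subset_isCompact isCompact_Icc
      ((subset_tsupport χ).trans (hχ_supp.trans Ioc_subset_Icc_self))
    have hsupp_u := tsupport_polarProduct_subset hχ_c hφ_c
      (hχ_supp.trans Ioc_subset_Ioi_self) hsupp
    have hu := contDiff_polarProduct hχ hφ hβ.2 hsupp_u
    have hc := hasCompactSupport_polarProduct hχ_c hφ_c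
    have key := h _ hu hc hsupp_u
    rw [setIntegral_polarProduct_sq_div_infDist_sq hβ hu.continuous hc hsupp_u,
      setIntegral_norm_gradient_polarProduct_sq hβ (hχ.of_le (by simp)) hχ_c (hφ.of_le (by simp))
        (hu.of_le (by simp)) hc (.of_integral_ne_zero hpos.ne')] at key
    have hφ_sq : 0 ≤ ∫ θ in 0..β, φ θ ^ 2 :=
      intervalIntegral.integral_nonneg hβ.1.le fun θ _ => sq_nonneg _
    refine le_of_mul_le_mul_left ?_ hpos
    linarith [mul_le_mul_of_nonneg_right henergy hφ_sq]
  have hlim : Tendsto (fun ε => (∫ θ in 0..β, deriv φ θ ^ 2) + ε * ∫ θ in 0..β, φ θ ^ 2)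
      (𝓝[>] 0) (𝓝 (∫ θ in 0..β, deriv φ θ ^ 2)) := by
    refine (Continuous.tendsto' (by fun_prop) 0 _ (by simp)).mono_left nhdsWithin_le_nhds
  exact ge_of_tendsto hlim (eventually_nhdsWithin_of_forall happrox)

end SeparatedTestFunctions

section Mollification

variable {β c : ℝ} {φ : ℝ → ℝ}

lemma exists_contDiff_infty_dist_le {U : Set ℝ} (hφ : ContDiff ℝ 1 φ) (hc : HasCompactSupport φ)
    (hU : IsOpen U) (hsupp : tsupport φ ⊆ U) {ε : ℝ} (hε : 0 < ε) :
    ∃ ψ : ℝ → ℝ, ContDiff ℝ ∞ ψ ∧ tsupport ψ ⊆ U ∧ (∀ x, dist (ψ x) (φ x) ≤ ε) ∧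
      ∀ x, dist (deriv ψ x) (deriv φ x) ≤ ε := by
  have hφ' := hφ.continuous_deriv le_rfl
  obtain ⟨η₀, hη₀, hφ_near⟩ := Metric.uniformContinuous_iff.1
    (hc.uniformContinuous_of_continuous hφ.continuous) ε hε
  obtain ⟨η₁, hη₁, hφ'_near⟩ := Metric.uniformContinuous_iff.1
    (hc.deriv.uniformContinuous_of_continuous hφ') ε hε
  obtain ⟨δ, hδ, hδU⟩ := hc.isCompact.exists_cthickening_subset_open hU hsupp
  set R := min δ (min η₀ η₁)
  have hR0 : 0 < R := lt_min hδ (lt_min hη₀ hη₁)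
  have hRη₀ : R ≤ η₀ := (min_le_right _ _).trans (min_le_left _ _)
  have hRη₁ : R ≤ η₁ := (min_le_right _ _).trans (min_le_right _ _)
  let b : ContDiffBump (0 : ℝ) := ⟨R / 2, R, half_pos hR0, half_lt_self hR0⟩
  let ψ := convolution (b.normed volume) φ (ContinuousLinearMap.lsmul ℝ ℝ) volume
  have hψ_supp : Function.support ψ ⊆ Metric.thickening δ (tsupport φ) := fun x hx => by
    by_contra hx'
    refine hx (dist_le_zero.1 ?_)
    have hφ_zero : ∀ y ∈ Metric.ball x R, φ y = 0 := fun y hy =>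
      image_eq_zero_of_notMem_tsupport fun h => hx' (Metric.mem_thickening_iff.2
        ⟨y, h, (dist_comm x y).trans_lt (lt_of_lt_of_le hy (min_le_left _ _))⟩)
    have h := b.dist_normed_convolution_le (μ := volume) (x₀ := x) (ε := 0)
      hφ.continuous.aestronglyMeasurable fun y hy => by
        rw [hφ_zero y hy, hφ_zero x (Metric.mem_ball_self hR0), dist_self]
    rwa [hφ_zero x (Metric.mem_ball_self hR0)] at h
  refine ⟨ψ, b.hasCompactSupport_normed.contDiff_convolution_left _ b.contDiff_normed
    hφ.continuous.locallyIntegrable,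
    (closure_mono hψ_supp).trans ((Metric.closure_thickening_subset_cthickening δ _).trans hδU),
    fun x => b.dist_normed_convolution_le hφ.continuous.aestronglyMeasurable fun y hy =>
      (hφ_near (lt_of_lt_of_le hy hRη₀)).le, fun x => ?_⟩
  rw [(hc.hasDerivAt_convolution_right (ContinuousLinearMap.lsmul ℝ ℝ)
    b.continuous_normed.locallyIntegrable hφ x).deriv]
  exact b.dist_normed_convolution_le hφ'.aestronglyMeasurable fun y hy =>
    (hφ'_near (lt_of_lt_of_le hy hRη₁)).le

lemma tendstoUniformly_sq_div_sq {X : Type*} [TopologicalSpace X] {K : Set X} {ψ : ℕ → X → ℝ}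
    {f w : X → ℝ} (hK : IsCompact K) (hψ : TendstoUniformly ψ f atTop) (hf : Continuous f)
    (hw : Continuous w) (hwK : ∀ x ∈ K, w x ≠ 0) (hψK : ∀ n, ∀ x ∉ K, ψ n x = 0) :
    TendstoUniformly (fun n x => ψ n x ^ 2 / w x ^ 2) (fun x => f x ^ 2 / w x ^ 2) atTop := by
  have hfK : ∀ x ∉ K, f x = 0 := fun x hx =>
    tendsto_nhds_unique (hψ.tendsto_at x) (by simp [hψK _ x hx])
  have hdiv : TendstoLocallyUniformlyOn (fun n x => ψ n x / w x) (fun x => f x / w x) atTop K :=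
    hψ.tendstoUniformlyOn.tendstoLocallyUniformlyOn.fun_div₀
      (Metric.tendstoUniformlyOn_iff.2 fun ε hε => by simp [hε]).tendstoLocallyUniformlyOn
      hf.continuousOn hw.continuousOn hwK
  have hcont : ContinuousOn (fun x => f x / w x) K := hf.continuousOn.div hw.continuousOn hwK
  have hsq := (tendstoLocallyUniformlyOn_iff_tendstoUniformlyOn_of_compact hK).1
    (hdiv.fun_mul₀ hdiv hcont hcont)
  refine Metric.tendstoUniformly_iff.2 fun ε hε => ?_
  filter_upwards [Metric.tendstoUniformlyOn_iff.1 hsq ε hε] with n hn x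
  by_cases hx : x ∈ K
  · simpa only [← sq, div_pow] using hn x hx
  · simpa [hfK x hx, hψK n x hx] using hε

lemma SectorHardyInequality.angularHardyInequality (h : SectorHardyInequality β c)
    (hβ : β ∈ Ioc 0 (2 * π)) : AngularHardyInequality β c := by
  intro φ hφ hsupp
  have hc : HasCompactSupport φ :=
    .of_support_subset_isCompact isCompact_Icc
      ((subset_tsupport φ).trans (hsupp.trans Ioo_subset_Icc_self))
  obtain ⟨K, hK, hφK, hKβ⟩ := exists_compact_between hc.isCompact isOpen_Ioo hsupp
  choose ψ hψ hψK hψ_dist hψ'_dist using fun n : ℕ => exists_contDiff_infty_dist_le hφ hc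
    isOpen_interior hφK (Nat.one_div_pos_of_nat (α := ℝ) (n := n))
  have hψ_supp (n) : tsupport (ψ n) ⊆ K := (hψK n).trans interior_subset
  have hψ_zero (n) : ∀ x ∉ K, ψ n x = 0 := fun x hx =>
    image_eq_zero_of_notMem_tsupport fun hx' => hx (hψ_supp n hx')
  have hψ'_zero (n) : ∀ x ∉ K, deriv (ψ n) x = 0 := fun x hx =>
    deriv_of_notMem_tsupport fun hx' => hx (hψ_supp n hx')
  have hunif {g : ℕ → ℝ → ℝ} {f : ℝ → ℝ} (hg : ∀ n : ℕ, ∀ x, dist (g n x) (f x) ≤ 1 / (n + 1)) :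
      TendstoUniformly g f atTop := by
    refine Metric.tendstoUniformly_iff.2 fun ε hε => ?_
    filter_upwards [tendsto_one_div_add_atTop_nhds_zero_nat.eventually_lt_const hε] with n hn x
    exact (dist_comm _ _).trans_lt ((hg n x).trans_lt hn)
  have hw : ∀ x ∈ K, angularDist β x ≠ 0 := fun x hx => (angularDist_pos (hKβ hx)).ne'
  have hmass := tendstoUniformly_sq_div_sq hK (hunif hψ_dist) hφ.continuous
    (continuous_angularDist β) hw hψ_zero
  have henergy := tendstoUniformly_sq_div_sq hK (hunif hψ'_dist) (hφ.continuous_deriv le_rfl)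
    (continuous_const (y := 1)) (fun _ _ => one_ne_zero) hψ'_zero
  simp only [one_pow, div_one] at henergy
  refine le_of_tendsto_of_tendsto'
    ((hmass.tendstoUniformlyOn.tendsto_intervalIntegral_of_continuousOn
      (.of_forall fun n => (continuous_sq_div_sq (hψ n).continuous (continuous_angularDist β)
        fun x hx => hw x (hψ_supp n hx)).continuousOn)).const_mul c)
    (henergy.tendstoUniformlyOn.tendsto_intervalIntegral_of_continuousOn
      (.of_forall fun n => (((hψ n).continuous_deriv (by simp)).pow 2).continuousOn))
    fun n => h.angular_of_contDiff_infty hβ (hψ n) ((hψ_supp n).trans hKβ)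

end Mollification

end HardySector

/-- The Hardy constant of the infinite sector of angle `β ∈ (π, 2π]`, i.e. the largest
constant `c` such that `∫_{S_β} |∇u|² ≥ c ∫_{S_β} u²/d²` for all `u ∈ C_c^∞(S_β)`,
equals `c_β`. -/
theorem hardy_constant_sector
    (β βcr cβ : ℝ) (hβ1 : Real.pi < β) (hβ2 : β ≤ 2 * Real.pi)
    (hβcr : isBetaCr βcr) (hcβ : isHardyConst βcr β cβ) :
    IsGreatest {c : ℝ |
      ∀ u : E2 → ℝ, ContDiff ℝ (⊤ : ℕ∞) u → HasCompactSupport u → tsupport u ⊆ sector β →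
        c * ∫ x in sector β, (u x) ^ 2 / (Metric.infDist x (frontier (sector β))) ^ 2 ≤
          ∫ x in sector β, ‖gradient u x‖ ^ 2} cβ := by
  have hπ := Real.pi_gt_three
  have hβ : β ∈ Ioc π (2 * π) := ⟨hβ1, hβ2⟩
  have hβ₀ : β ∈ Ioc 0 (2 * π) := ⟨by linarith, hβ2⟩
  rcases hcβ with ⟨hle, rfl⟩ | ⟨-, hc, heq⟩
  · have hγ : βcr ∈ Ioc π (2 * π) := Ioo_subset_Ioc_self hβcr.1
    have hangular := HardySector.angularHardyInequality_of_hardyEq (by norm_num) hγ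
      (HardySector.hardyEq_of_isBetaCr hβcr) ⟨hβ₀.1, hle⟩
    refine ⟨hangular.sectorHardyInequality hβ₀, fun c hc => ?_⟩
    exact (HardySector.SectorHardyInequality.angularHardyInequality hc hβ₀).le_quarter
      (by linarith)
  · have hangular := HardySector.angularHardyInequality_of_hardyEq hc hβ heq ⟨hβ₀.1, le_rfl⟩
    refine ⟨hangular.sectorHardyInequality hβ₀, fun c hc' => ?_⟩
    exact (HardySector.SectorHardyInequality.angularHardyInequality hc' hβ₀).le_of_hardyEq
      hβ hc heq
end

section
/- There exists exactly one β ∈ (π, 2π) satisfying tan((β−π)/4) = 4·(Γ(3/4)/Γ(1/4))², where Γ is the Gamma function; moreover, for this β the value c = 1/4 solves the Hardy-constant equation for β. -/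
open Real Set

/-!
With `x = (β - π) / 4`, the angle equation says that `tan x` is a given constant for some
`x ∈ (0, π / 4)`. As `tan` maps `(0, π / 4)` bijectively onto `(0, 1)`, it suffices that this
constant lies in `(0, 1)`, that is, `(Γ(s + 1/2) / Γ(s))² < s` at `s = 1/4`. The non-strict
inequality is log-convexity of `Γ` on `[s, s + 1]`; using it at `s + 1` instead, and returning to
`s` by the functional equation, gains the strictness of Bernoulli's inequality.
-/

theorem Gamma_add_le_rpow_mul_Gamma {s a : ℝ} (hs : 0 < s) (ha : a ∈ Ioo 0 1) :
    Gamma (s + a) ≤ s ^ a * Gamma s := by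
  have hΓ : 0 < Gamma s := Gamma_pos_of_pos hs
  calc Gamma (s + a) = Gamma ((1 - a) * s + a * (s + 1)) := by ring_nf
    _ ≤ Gamma s ^ (1 - a) * Gamma (s + 1) ^ a :=
        Gamma_mul_add_mul_le_rpow_Gamma_mul_rpow_Gamma hs (by positivity)
          (sub_pos.2 ha.2) ha.1 (sub_add_cancel 1 a)
    _ = s ^ a * (Gamma s ^ (1 - a) * Gamma s ^ a) := by
        rw [Gamma_add_one hs.ne', mul_rpow hs.le hΓ.le]; ring
    _ = s ^ a * Gamma s := by rw [← rpow_add hΓ, sub_add_cancel, rpow_one]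

theorem add_one_rpow_mul_lt_rpow_mul_add {s a : ℝ} (hs : 0 < s) (ha : a ∈ Ioo 0 1) :
    (s + 1) ^ a * s < s ^ a * (s + a) := by
  have bernoulli : (1 + s⁻¹) ^ a < 1 + a * s⁻¹ :=
    rpow_one_add_lt_one_add_mul_self (by linarith [inv_pos.2 hs]) (inv_ne_zero hs.ne') ha.1 ha.2
  calc (s + 1) ^ a * s = (s * (1 + s⁻¹)) ^ a * s := by
        rw [mul_add, mul_one, mul_inv_cancel₀ hs.ne']
    _ = s ^ a * s * (1 + s⁻¹) ^ a := by rw [mul_rpow hs.le (by positivity)]; ring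
    _ < s ^ a * s * (1 + a * s⁻¹) := by gcongr
    _ = s ^ a * (s + a) := by field_simp

theorem Gamma_add_lt_rpow_mul_Gamma {s a : ℝ} (hs : 0 < s) (ha : a ∈ Ioo 0 1) :
    Gamma (s + a) < s ^ a * Gamma s := by
  have hsa : 0 < s + a := add_pos hs ha.1
  refine lt_of_mul_lt_mul_left ?_ hsa.le
  calc (s + a) * Gamma (s + a) = Gamma (s + 1 + a) := by
        rw [← Gamma_add_one hsa.ne', add_right_comm]
    _ ≤ (s + 1) ^ a * Gamma (s + 1) := Gamma_add_le_rpow_mul_Gamma (by positivity) ha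
    _ = (s + 1) ^ a * s * Gamma s := by rw [Gamma_add_one hs.ne', mul_assoc]
    _ < s ^ a * (s + a) * Gamma s :=
        mul_lt_mul_of_pos_right (add_one_rpow_mul_lt_rpow_mul_add hs ha) (Gamma_pos_of_pos hs)
    _ = (s + a) * (s ^ a * Gamma s) := by ring

theorem sq_Gamma_add_half_div_Gamma_lt {s : ℝ} (hs : 0 < s) :
    (Gamma (s + 1 / 2) / Gamma s) ^ 2 < s := by
  rw [← lt_sqrt (by positivity), div_lt_iff₀ (Gamma_pos_of_pos hs), sqrt_eq_rpow]
  exact Gamma_add_lt_rpow_mul_Gamma hs (by norm_num)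

theorem existsUnique_mem_Ioo_tan_eq {a b y : ℝ} (ha : -(π / 2) < a) (hb : b < π / 2)
    (hab : a < b) (hy : y ∈ Ioo (tan a) (tan b)) : ∃! x, x ∈ Ioo a b ∧ tan x = y := by
  refine ⟨arctan y, ⟨⟨?_, ?_⟩, tan_arctan y⟩, ?_⟩
  · simpa only [arctan_tan ha (hab.trans hb)] using arctan_strictMono hy.1
  · simpa only [arctan_tan (ha.trans hab) hb] using arctan_strictMono hy.2
  · rintro x ⟨hx, hxy⟩
    exact (arctan_eq_of_tan_eq hxy ⟨ha.trans hx.1, hx.2.trans hb⟩).symm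

theorem four_mul_sq_Gamma_ratio_mem_Ioo :
    4 * (Gamma (3 / 4) / Gamma (1 / 4)) ^ 2 ∈ Ioo 0 1 := by
  have hlt := sq_Gamma_add_half_div_Gamma_lt (s := 1 / 4) (by norm_num)
  rw [show (1 / 4 + 1 / 2 : ℝ) = 3 / 4 by norm_num] at hlt
  exact ⟨by positivity, by linarith⟩

theorem hardyEq_one_quarter_iff (β : ℝ) :
    hardyEq (1 / 4) β ↔ tan ((β - π) / 4) = 4 * (Gamma (3 / 4) / Gamma (1 / 4)) ^ 2 := by
  have sqrt_quarter : √(1 / 4 : ℝ) = 1 / 2 := by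
    rw [sqrt_eq_iff_mul_self_eq] <;> norm_num
  have sqrt_discr : √(1 - 4 * (1 / 4) : ℝ) = 0 := by norm_num
  rw [hardyEq, sqrt_quarter, sqrt_discr, add_zero, add_zero,
    show 1 / 2 * ((β - π) / 2) = (β - π) / 4 by ring]
  constructor <;> intro h <;> linarith

/-- There is exactly one `β ∈ (π, 2π)` with `tan((β−π)/4) = 4 (Γ(3/4)/Γ(1/4))²`, and for
this `β` the value `c = 1/4` solves the Hardy-constant equation for `β`. -/
theorem critical_angle_exists_unique :
    (∃! β : ℝ, β ∈ Set.Ioo Real.pi (2 * Real.pi) ∧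
      Real.tan ((β - Real.pi) / 4) = 4 * (Real.Gamma (3 / 4) / Real.Gamma (1 / 4)) ^ 2) ∧
    ∀ β : ℝ, β ∈ Set.Ioo Real.pi (2 * Real.pi) →
      Real.tan ((β - Real.pi) / 4) = 4 * (Real.Gamma (3 / 4) / Real.Gamma (1 / 4)) ^ 2 →
      hardyEq (1 / 4) β := by
  refine ⟨?_, fun β _ hβ => (hardyEq_one_quarter_iff β).2 hβ⟩
  have mem_Ioo_tan : 4 * (Gamma (3 / 4) / Gamma (1 / 4)) ^ 2 ∈ Ioo (tan 0) (tan (π / 4)) := by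
    simpa only [tan_zero, tan_pi_div_four] using four_mul_sq_Gamma_ratio_mem_Ioo
  obtain ⟨x, ⟨hx, hx_tan⟩, hx_unique⟩ :=
    existsUnique_mem_Ioo_tan_eq (a := 0) (b := π / 4) (by linarith [pi_pos]) (by linarith [pi_pos])
      (by positivity) mem_Ioo_tan
  refine ⟨π + 4 * x, ⟨⟨by linarith [hx.1], by linarith [hx.2]⟩, ?_⟩, ?_⟩
  · rwa [add_sub_cancel_left, mul_div_cancel_left₀ x four_ne_zero]
  · rintro β ⟨hβ, hβ_tan⟩
    have hβx : (β - π) / 4 = x :=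
      hx_unique _ ⟨⟨by linarith [hβ.1], by linarith [hβ.2]⟩, hβ_tan⟩
    linarith
end

section
/- Let β ∈ (π, β_cr]. Then the largest c > 0 for which the boundary value problem −ψ''(θ) = c·V(θ)·ψ(θ) on (0, β/2), with ψ(θ) → 0 as θ → 0+ and ψ'(β/2) = 0, admits a positive solution is c = 1/4. -/
open Real Set
open scoped Classical

/-- The potential `V` on `(0, β)`. -/
noncomputable def Vpot (β θ : ℝ) : ℝ :=
  if θ < Real.pi / 2 then 1 / Real.sin θ ^ 2
  else if θ < β - Real.pi / 2 then 1
  else 1 / Real.sin (β - θ) ^ 2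

/-- `ψ` is a positive solution of the boundary value problem
`−ψ'' = c·V·ψ` on `(0, β/2)`, `ψ(0+) = 0`, `ψ'(β/2) = 0`. -/
def IsBVPSolution (β c : ℝ) (ψ : ℝ → ℝ) : Prop :=
  ∃ ψ' : ℝ → ℝ,
    (∀ θ ∈ Set.Ioc 0 (β / 2), HasDerivWithinAt ψ (ψ' θ) (Set.Ioc 0 (β / 2)) θ) ∧
    (∀ θ ∈ Set.Ioo 0 (β / 2),
      HasDerivWithinAt ψ' (-(c * Vpot β θ * ψ θ)) (Set.Ioc 0 (β / 2)) θ) ∧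
    (∀ θ ∈ Set.Ioc 0 (β / 2), 0 < ψ θ) ∧
    Filter.Tendsto ψ (nhdsWithin 0 (Set.Ioi 0)) (nhds 0) ∧
    ψ' (β / 2) = 0

/-!
Near `0` one has `V θ ≥ 1 / θ ^ 2`, so Kneser's criterion gives `c ≤ 1 / 4`: for a positive
solution `ψ`, the function `v = θ ψ' / ψ - 1 / 2` satisfies
`v' ≤ -(v ^ 2 + (c - 1 / 4)) / θ`, and for `c > 1 / 4` the corresponding Prüfer angle would turn
without bound as `θ → 0`.

For `c = 1 / 4` write `ψ θ = √(sin θ) y (cos θ)` on `(0, π / 2]`; then `y` solves Legendre's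
equation of degree `-1 / 2`, and at `π / 2` it has to be matched with a multiple of
`cos ((β / 2 - θ) / 2)`. In the power series `∑ aₖ xᵏ` whose coefficients are given by a single
Gamma formula, each odd coefficient is smaller than the preceding even one, so the even part minus
`q` times the odd part is positive on `(-1, 1)` when `|q| ≤ 1`. Matching requires
`q = tan ((β - π) / 4) a₀ / (2 a₁)`, and `a₁ / a₀ = 2 (Γ(3/4) / Γ(1/4)) ^ 2` makes `q ≤ 1`
equivalent to `β ≤ βcr`. The bound `aₖ = O(1 / k)` allows at most a logarithmic singularity of `y`
at `1`, which the factor `√(sin θ)` absorbs.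
-/

open Filter
open scoped Topology

section PowerSeries

variable {𝕜 : Type*} [RCLike 𝕜] {f : 𝕜 → 𝕜} {a : ℕ → 𝕜} {R : ℝ} {x : 𝕜}

lemma hasFPowerSeriesOnBall_ofScalars_of_hasSum (hR : 0 < R)
    (hf : ∀ x, ‖x‖ < R → HasSum (fun k => a k * x ^ k) (f x)) :
    HasFPowerSeriesOnBall f (FormalMultilinearSeries.ofScalars 𝕜 a) 0 (ENNReal.ofReal R) where
  r_le := by
    refine ENNReal.le_of_forall_nnreal_lt fun r hr => ?_
    have hr' : ‖((r : ℝ) : 𝕜)‖ < R := by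
      simpa using ENNReal.lt_ofReal_iff_toReal_lt ENNReal.coe_ne_top |>.1 hr
    refine FormalMultilinearSeries.le_radius_of_tendsto (l := 0) _ ?_
    simpa [FormalMultilinearSeries.ofScalars_norm] using
      (hf _ hr').summable.tendsto_atTop_zero.norm
  r_pos := by simpa using hR
  hasSum := by
    intro y hy
    have hy' : ‖y‖ < R := by
      simpa [← ofReal_norm, ENNReal.ofReal_lt_ofReal_iff hR] using hy
    simpa [FormalMultilinearSeries.ofScalars_apply_eq, mul_comm] using hf y hy'

lemma differentiableAt_of_hasSum_pow (hf : ∀ x, ‖x‖ < R → HasSum (fun k => a k * x ^ k) (f x))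
    (hx : ‖x‖ < R) : DifferentiableAt 𝕜 f x := by
  have hR := (norm_nonneg x).trans_lt hx
  refine ((hasFPowerSeriesOnBall_ofScalars_of_hasSum hR hf).analyticAt_of_mem ?_).differentiableAt
  simpa [← ofReal_norm, ENNReal.ofReal_lt_ofReal_iff hR] using hx

lemma hasSum_deriv_of_hasSum_pow (hf : ∀ x, ‖x‖ < R → HasSum (fun k => a k * x ^ k) (f x))
    (hx : ‖x‖ < R) :
    HasSum (fun k : ℕ => (k + 1) * a (k + 1) * x ^ k) (deriv f x) := by
  have hR := (norm_nonneg x).trans_lt hx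
  have hfderiv := (hasFPowerSeriesOnBall_ofScalars_of_hasSum hR hf).fderiv.hasSum (y := x)
    (by simpa [← ofReal_norm, ENNReal.ofReal_lt_ofReal_iff hR] using hx)
  have hderiv := (ContinuousLinearMap.apply 𝕜 𝕜 (1 : 𝕜)).hasSum hfderiv
  simpa [FormalMultilinearSeries.apply_eq_pow_smul_coeff, mul_comm, mul_left_comm] using hderiv

lemma legendre_ode_of_recurrence {l : 𝕜}
    (hf : ∀ x, ‖x‖ < R → HasSum (fun k => a k * x ^ k) (f x))
    (ha : ∀ k : ℕ, ((k : 𝕜) + 1) * (k + 2) * a (k + 2) = (k * (k + 1) - l) * a k)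
    (hx : ‖x‖ < R) :
    (1 - x ^ 2) * deriv (deriv f) x - 2 * x * deriv f x + l * f x = 0 := by
  have hf' : ∀ x, ‖x‖ < R → HasSum (fun k : ℕ => (k + 1) * a (k + 1) * x ^ k) (deriv f x) :=
    fun _ => hasSum_deriv_of_hasSum_pow hf
  have hf'' := hasSum_deriv_of_hasSum_pow hf' hx
  have hxf' : HasSum (fun k : ℕ => k * a k * x ^ k) (x * deriv f x) := by
    rw [← hasSum_nat_add_iff' 1]
    convert! (hf' x hx).mul_left x using 1
    · funext k; push_cast; ring
    · simp
  have hxxf'' : HasSum (fun k : ℕ => k * (k - 1) * a k * x ^ k) (x ^ 2 * deriv (deriv f) x) := by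
    rw [← hasSum_nat_add_iff' 2]
    convert! hf''.mul_left (x ^ 2) using 1
    · funext k; push_cast; ring
    · simp [Finset.sum_range_succ]
  have hode := ((hf''.sub hxxf'').sub (hxf'.mul_left 2)).add ((hf x hx).mul_left l)
  have hcoeff (k : ℕ) : (k + 1) * (((k + 1 : ℕ) : 𝕜) + 1) * a (k + 1 + 1) * x ^ k
      - k * (k - 1) * a k * x ^ k - 2 * (k * a k * x ^ k) + l * (a k * x ^ k) = 0 := by
    push_cast
    linear_combination x ^ k * ha k
  simp only [← mul_assoc] at hode hcoeff
  simp only [hcoeff] at hode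
  linear_combination hode.unique hasSum_zero

end PowerSeries

section RealPowerSeries

variable {f : ℝ → ℝ} {a : ℕ → ℝ} {x : ℝ}

lemma pos_of_hasSum_pow_of_abs_odd_lt_even {s : ℝ} (ha : ∀ j, |a (2 * j + 1)| < a (2 * j))
    (hx : |x| ≤ 1) (hs : HasSum (fun k => a k * x ^ k) s) : 0 < s := by
  have hpair (j : ℕ) : 0 < a (2 * j) + a (2 * j + 1) * x := by
    have hodd : |a (2 * j + 1) * x| ≤ |a (2 * j + 1)| := by
      rw [abs_mul]; exact mul_le_of_le_one_right (abs_nonneg _) hx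
    linarith [ha j, neg_abs_le (a (2 * j + 1) * x)]
  have hsum : HasSum (fun j => (a (2 * j) + a (2 * j + 1) * x) * (x ^ 2) ^ j) s := by
    have hinj : Function.Injective fun j : ℕ => 2 * j := mul_right_injective₀ two_ne_zero
    have heven := (hs.summable.comp_injective hinj).hasSum
    have hodd := (hs.summable.comp_injective ((add_left_injective 1).comp hinj)).hasSum
    rw [hs.unique (heven.even_add_odd hodd)]
    convert! heven.add hodd using 2 with j
    simp only [Function.comp_apply]
    ring
  rw [← hsum.tsum_eq]
  exact hsum.summable.tsum_pos (fun j => by have := hpair j; positivity) 0 (by simpa using hpair 0)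

lemma abs_le_of_hasSum_pow_of_abs_coeff_le {K : ℝ}
    (hf : ∀ x, |x| < 1 → HasSum (fun k => a k * x ^ k) (f x))
    (ha : ∀ k : ℕ, |a (k + 1)| ≤ K / (k + 1)) (hx₀ : 0 ≤ x) (hx₁ : x < 1) :
    |f x| ≤ |a 0| + K * -log (1 - x) := by
  have hx : |x| < 1 := by rwa [abs_of_nonneg hx₀]
  have htail : HasSum (fun k => a (k + 1) * x ^ (k + 1)) (f x - a 0) := by
    simpa using (hasSum_nat_add_iff' 1).2 (hf x hx)
  have hlog := (hasSum_pow_div_log_of_abs_lt_one hx).mul_left K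
  have hle : |f x - a 0| ≤ K * -log (1 - x) := by
    rw [← htail.tsum_eq, ← norm_eq_abs]
    refine tsum_of_norm_bounded hlog fun k => ?_
    calc |a (k + 1) * x ^ (k + 1)| = |a (k + 1)| * x ^ (k + 1) := by
          rw [abs_mul, abs_of_nonneg (pow_nonneg hx₀ _)]
      _ ≤ K / (k + 1) * x ^ (k + 1) := by gcongr; exact ha k
      _ = K * (x ^ (k + 1) / (k + 1)) := by ring
  linarith [abs_sub_abs_le_abs_sub (f x) (a 0)]

lemma tendsto_rpow_mul_of_hasSum_pow_of_abs_coeff_le {K s : ℝ} (hs : 0 < s)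
    (hf : ∀ x, |x| < 1 → HasSum (fun k => a k * x ^ k) (f x))
    (ha : ∀ k : ℕ, |a (k + 1)| ≤ K / (k + 1)) :
    Tendsto (fun x => (1 - x) ^ s * f x) (𝓝[<] 1) (𝓝 0) := by
  have hsub : Tendsto (fun x : ℝ => 1 - x) (𝓝[<] 1) (𝓝[>] 0) := by
    refine tendsto_nhdsWithin_iff.2 ⟨?_, eventually_mem_nhdsWithin.mono fun x hx =>
      mem_Ioi.2 (sub_pos.2 (mem_Iio.1 hx))⟩
    exact ((continuous_const.sub continuous_id).tendsto' 1 0 (sub_self 1)).mono_left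
      nhdsWithin_le_nhds
  have hpow : Tendsto (fun u : ℝ => u ^ s) (𝓝[>] 0) (𝓝 0) := by
    simpa [zero_rpow hs.ne'] using
      ((continuousAt_rpow_const 0 s (.inr hs.le)).tendsto.mono_left nhdsWithin_le_nhds)
  have hbound : Tendsto (fun u => |a 0| * u ^ s - K * (log u * u ^ s)) (𝓝[>] 0) (𝓝 0) := by
    simpa using (hpow.const_mul |a 0|).sub ((tendsto_log_mul_rpow_nhdsGT_zero hs).const_mul K)
  refine squeeze_zero_norm' ?_ (hbound.comp hsub)
  filter_upwards [Ioo_mem_nhdsLT one_pos] with x hx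
  have hpos : 0 ≤ (1 - x) ^ s := rpow_nonneg (by linarith [hx.2]) s
  calc ‖(1 - x) ^ s * f x‖ = (1 - x) ^ s * |f x| := by
        rw [norm_eq_abs, abs_mul, abs_of_nonneg hpos]
    _ ≤ (1 - x) ^ s * (|a 0| + K * -log (1 - x)) := by
        gcongr; exact abs_le_of_hasSum_pow_of_abs_coeff_le hf ha hx.1.le hx.2
    _ = |a 0| * (1 - x) ^ s - K * (log (1 - x) * (1 - x) ^ s) := by ring

end RealPowerSeries

section Glue

variable {E : Type*} [NormedAddCommGroup E] [NormedSpace ℝ E]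

lemma hasDerivAt_ite_lt {f f' g g' : ℝ → E} {a x : ℝ} (hfg : f a = g a) (hfg' : f' a = g' a)
    (hf : x ≤ a → HasDerivAt f (f' x) x) (hg : a ≤ x → HasDerivAt g (g' x) x) :
    HasDerivAt (fun t => if t < a then f t else g t) (if x < a then f' x else g' x) x := by
  rcases lt_trichotomy x a with hx | rfl | hx
  · rw [if_pos hx]
    refine (hf hx.le).congr_of_eventuallyEq ?_
    filter_upwards [Iio_mem_nhds hx] with t ht using if_pos ht
  · rw [if_neg (lt_irrefl x), ← hasDerivWithinAt_univ, ← Iic_union_Ici (a := x)]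
    refine .union ?_ ?_
    · refine (hfg' ▸ hf le_rfl).hasDerivWithinAt.congr_of_mem (fun t ht => ?_) self_mem_Iic
      rcases (mem_Iic.1 ht).lt_or_eq with htx | rfl
      · exact if_pos htx
      · rw [if_neg (lt_irrefl t), hfg]
    · exact (hg le_rfl).hasDerivWithinAt.congr_of_mem (fun t ht => if_neg (mem_Ici.1 ht).not_gt)
        self_mem_Ici
  · rw [if_neg hx.not_gt]
    refine (hg hx.le).congr_of_eventuallyEq ?_
    filter_upwards [Ioi_mem_nhds hx] with t ht using if_neg (mem_Ioi.1 ht).not_gt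

end Glue

section Kneser

lemma exists_neg_sq_add_sq_div_lt_of_hasDerivAt {v v' : ℝ → ℝ} {d R : ℝ} (hd : 0 < d) (hR : 0 < R)
    (hv : ∀ θ ∈ Ioo 0 R, HasDerivAt v (v' θ) θ) :
    ∃ θ ∈ Ioo 0 R, -(v θ ^ 2 + d ^ 2) / θ < v' θ := by
  by_contra! hriccati
  -- The Prüfer angle in the variable `log θ`: it is antitone, yet tends to `-∞` at `0`.
  set G : ℝ → ℝ := fun θ => arctan (v θ / d) + d * log θ
  have hG : ∀ θ ∈ Ioo 0 R,
      HasDerivAt G (d * (v' θ + (v θ ^ 2 + d ^ 2) / θ) / (v θ ^ 2 + d ^ 2)) θ := by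
    intro θ hθ
    have hθ₀ := hθ.1.ne'
    convert! ((hv θ hθ).div_const d).arctan.add ((hasDerivAt_log hθ₀).const_mul d) using 1
    have : v θ ^ 2 + d ^ 2 ≠ 0 := by positivity
    have : 1 + (v θ / d) ^ 2 = (v θ ^ 2 + d ^ 2) / d ^ 2 := by field_simp; ring
    rw [this]
    field_simp
  have hanti : AntitoneOn G (Ioo 0 R) := by
    refine antitoneOn_of_hasDerivWithinAt_nonpos (convex_Ioo 0 R)
      (fun θ hθ => (hG θ hθ).continuousAt.continuousWithinAt)
      (fun θ hθ => (hG θ (interior_subset hθ)).hasDerivWithinAt) fun θ hθ => ?_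
    have hle := hriccati θ (interior_subset hθ)
    rw [neg_div] at hle
    exact div_nonpos_of_nonpos_of_nonneg
      (mul_nonpos_of_nonneg_of_nonpos hd.le (by linarith)) (by positivity)
  have hbot : Tendsto G (𝓝[>] 0) atBot :=
    tendsto_atBot_add_left_of_ge _ (π / 2) (fun θ => (arctan_lt_pi_div_two _).le)
      (tendsto_log_nhdsGT_zero.const_mul_atBot hd)
  obtain ⟨θ, hGθ, hθ⟩ := ((hbot.eventually_lt_atBot (G (R / 2))).and
    (Ioo_mem_nhdsGT (half_pos hR))).exists
  exact hGθ.not_ge (hanti ⟨hθ.1, by linarith [hθ.2]⟩ ⟨by linarith, by linarith⟩ hθ.2.le)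

theorem le_one_quarter_of_pos_of_deriv2_le {ψ ψ' ψ'' : ℝ → ℝ} {c R : ℝ} (hR : 0 < R)
    (hψ : ∀ θ ∈ Ioo 0 R, HasDerivAt ψ (ψ' θ) θ) (hψ' : ∀ θ ∈ Ioo 0 R, HasDerivAt ψ' (ψ'' θ) θ)
    (hpos : ∀ θ ∈ Ioo 0 R, 0 < ψ θ) (hψ'' : ∀ θ ∈ Ioo 0 R, ψ'' θ ≤ -(c / θ ^ 2 * ψ θ)) :
    c ≤ 1 / 4 := by
  by_contra! hc
  have hv : ∀ θ ∈ Ioo 0 R, HasDerivAt (fun θ => θ * ψ' θ / ψ θ - 1 / 2)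
      (((1 * ψ' θ + θ * ψ'' θ) * ψ θ - θ * ψ' θ * ψ' θ) / ψ θ ^ 2) θ := fun θ hθ =>
    (((hasDerivAt_id θ).mul (hψ' θ hθ)).div (hψ θ hθ) (hpos θ hθ).ne').sub_const (1 / 2)
  obtain ⟨θ, hθ, hlt⟩ :=
    exists_neg_sq_add_sq_div_lt_of_hasDerivAt (sqrt_pos.2 (sub_pos.2 hc)) hR hv
  rw [sq_sqrt (sub_pos.2 hc).le] at hlt
  refine hlt.not_ge ?_
  have hθ₀ := hθ.1
  have hψθ := hpos θ hθ
  calc ((1 * ψ' θ + θ * ψ'' θ) * ψ θ - θ * ψ' θ * ψ' θ) / ψ θ ^ 2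
      ≤ ((1 * ψ' θ + θ * -(c / θ ^ 2 * ψ θ)) * ψ θ - θ * ψ' θ * ψ' θ) / ψ θ ^ 2 := by
        gcongr; exact hψ'' θ hθ
    _ = -((θ * ψ' θ / ψ θ - 1 / 2) ^ 2 + (c - 1 / 4)) / θ := by field_simp; ring

end Kneser

section BVP

variable {β c θ : ℝ}

lemma Vpot_of_lt_pi_div_two (hθ : θ < π / 2) : Vpot β θ = 1 / sin θ ^ 2 := if_pos hθ

lemma Vpot_of_pi_div_two_le (hθ : π / 2 ≤ θ) (hθβ : θ < β - π / 2) : Vpot β θ = 1 := by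
  rw [Vpot, if_neg hθ.not_gt, if_pos hθβ]

lemma one_div_sq_le_Vpot (hθ₀ : 0 < θ) (hθ : θ < π / 2) : 1 / θ ^ 2 ≤ Vpot β θ := by
  have hsin : 0 < sin θ := sin_pos_of_pos_of_lt_pi hθ₀ (by linarith)
  rw [Vpot_of_lt_pi_div_two hθ]
  gcongr
  exact sin_le hθ₀.le

theorem le_one_quarter_of_isBVPSolution {ψ : ℝ → ℝ} (hβ : 0 < β) (hψ : IsBVPSolution β c ψ) :
    c ≤ 1 / 4 := by
  by_contra! hc
  obtain ⟨ψ', hderiv, hderiv2, hpos, -, -⟩ := hψ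
  have hmem : ∀ θ ∈ Ioo 0 (min (π / 2) (β / 2)), θ ∈ Ioo 0 (β / 2) :=
    fun θ hθ => ⟨hθ.1, hθ.2.trans_le (min_le_right _ _)⟩
  have hnhds : ∀ θ ∈ Ioo 0 (min (π / 2) (β / 2)), Ioc 0 (β / 2) ∈ 𝓝 θ :=
    fun θ hθ => Ioc_mem_nhds hθ.1 (hmem θ hθ).2
  refine hc.not_ge (le_one_quarter_of_pos_of_deriv2_le (lt_min (half_pos pi_pos) (half_pos hβ))
    (fun θ hθ => (hderiv θ (Ioo_subset_Ioc_self (hmem θ hθ))).hasDerivAt (hnhds θ hθ))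
    (fun θ hθ => (hderiv2 θ (hmem θ hθ)).hasDerivAt (hnhds θ hθ))
    (fun θ hθ => hpos θ (Ioo_subset_Ioc_self (hmem θ hθ))) fun θ hθ => ?_)
  have hV : 1 / θ ^ 2 ≤ Vpot β θ := one_div_sq_le_Vpot hθ.1 (hθ.2.trans_le (min_le_left _ _))
  have hψθ := hpos θ (Ioo_subset_Ioc_self (hmem θ hθ))
  rw [neg_le_neg_iff, ← mul_one_div]
  gcongr

end BVP

lemma sq_Gamma_midpoint_le {x y : ℝ} (hx : 0 < x) (hy : 0 < y) :
    Gamma ((x + y) / 2) ^ 2 ≤ Gamma x * Gamma y := by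
  have hconv := Gamma_mul_add_mul_le_rpow_Gamma_mul_rpow_Gamma hx hy
    one_half_pos one_half_pos (add_halves 1)
  have hmid : 1 / 2 * x + 1 / 2 * y = (x + y) / 2 := by ring
  rw [hmid, ← sqrt_eq_rpow, ← sqrt_eq_rpow, ← sqrt_mul (Gamma_pos_of_pos hx).le] at hconv
  exact (le_sqrt' (Gamma_pos_of_pos (by positivity))).1 hconv

section LegendreCoeff

/-- Taylor coefficients at `0` of a solution of Legendre's equation of degree `-1/2`. The common
Gamma formula fixes the ratio of the even and odd parts so that the sequence is decreasing. -/
noncomputable def legendreCoeff (k : ℕ) : ℝ :=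
  Gamma (k / 2 + 1 / 4) ^ 2 / (Gamma (k / 2 + 1 / 2) * Gamma (k / 2 + 1))

lemma legendreCoeff_pos (k : ℕ) : 0 < legendreCoeff k := by
  unfold legendreCoeff
  positivity

lemma legendreCoeff_recurrence (k : ℕ) :
    ((k : ℝ) + 1) * (k + 2) * legendreCoeff (k + 2) = (k * (k + 1) + 1 / 4) * legendreCoeff k := by
  have hstep {x : ℝ} (hx : 0 < x) :
      Gamma (((k + 2 : ℕ) : ℝ) / 2 + x) = (k / 2 + x) * Gamma (k / 2 + x) := by
    rw [← Gamma_add_one (by positivity)]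
    push_cast
    ring_nf
  simp only [legendreCoeff]
  rw [hstep (by norm_num), hstep (by norm_num), hstep one_pos]
  field_simp
  ring

lemma legendreCoeff_strictAnti : StrictAnti legendreCoeff := by
  refine strictAnti_nat_of_succ_lt fun k => ?_
  have hmid : Gamma ((k : ℝ) / 2 + 3 / 4) ^ 2 < (k / 2 + 1 / 2) * Gamma (k / 2 + 1 / 4) ^ 2 :=
    calc Gamma ((k : ℝ) / 2 + 3 / 4) ^ 2
        = Gamma ((k / 2 + 1 / 4 + (k / 2 + 1 / 4 + 1)) / 2) ^ 2 := by ring_nf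
      _ ≤ Gamma (k / 2 + 1 / 4) * Gamma (k / 2 + 1 / 4 + 1) :=
        sq_Gamma_midpoint_le (by positivity) (by positivity)
      _ = (k / 2 + 1 / 4) * Gamma (k / 2 + 1 / 4) ^ 2 := by
        rw [Gamma_add_one (by positivity)]; ring
      _ < (k / 2 + 1 / 2) * Gamma (k / 2 + 1 / 4) ^ 2 := by gcongr; norm_num
  calc legendreCoeff (k + 1)
      = Gamma (k / 2 + 3 / 4) ^ 2 / (Gamma (k / 2 + 1) * Gamma (k / 2 + 1 / 2 + 1)) := by
        rw [legendreCoeff]; push_cast; ring_nf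
    _ = Gamma (k / 2 + 3 / 4) ^ 2 / (k / 2 + 1 / 2) /
          (Gamma (k / 2 + 1 / 2) * Gamma (k / 2 + 1)) := by
        rw [Gamma_add_one (s := k / 2 + 1 / 2) (by positivity)]; field_simp
    _ < legendreCoeff k := by
        rw [legendreCoeff]
        gcongr
        rwa [div_lt_iff₀' (by positivity)]

lemma legendreCoeff_succ_le (k : ℕ) : legendreCoeff (k + 1) ≤ 2 / (k + 1) := by
  have hs : 0 < ((k : ℝ) + 1) / 2 := by positivity
  calc legendreCoeff (k + 1)
      = Gamma (((k + 1) / 2 + ((k + 1) / 2 + 1 / 2)) / 2) ^ 2 /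
          (Gamma ((k + 1) / 2 + 1 / 2) * Gamma ((k + 1) / 2 + 1)) := by
        rw [legendreCoeff]; push_cast; ring_nf
    _ ≤ Gamma ((k + 1) / 2) * Gamma ((k + 1) / 2 + 1 / 2) /
          (Gamma ((k + 1) / 2 + 1 / 2) * Gamma ((k + 1) / 2 + 1)) := by
        rw [Gamma_add_one hs.ne']
        gcongr
        exact sq_Gamma_midpoint_le hs (by positivity)
    _ = 2 / (k + 1) := by
        rw [Gamma_add_one hs.ne']; field_simp

lemma legendreCoeff_one :
    legendreCoeff 1 = 2 * (Gamma (3 / 4) / Gamma (1 / 4)) ^ 2 * legendreCoeff 0 := by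
  have hΓ : Gamma (1 / 2 + 1) = 1 / 2 * Gamma (1 / 2) := Gamma_add_one (by norm_num)
  norm_num [legendreCoeff] at hΓ ⊢
  rw [hΓ]
  field_simp

end LegendreCoeff

section LegendreSol

/-- Taylor coefficients at `0` of `legendreSol q`. -/
noncomputable def legendreSolCoeff (q : ℝ) (k : ℕ) : ℝ :=
  if Even k then legendreCoeff k else -(q * legendreCoeff k)

/-- The solution on `(-1, 1)` of Legendre's equation of degree `-1/2` given by the even part of
`∑ legendreCoeff k * x ^ k` minus `q` times its odd part; it is positive when `|q| ≤ 1`. -/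
noncomputable def legendreSol (q x : ℝ) : ℝ := ∑' k, legendreSolCoeff q k * x ^ k

variable {q x : ℝ}

lemma legendreSolCoeff_recurrence (q : ℝ) (k : ℕ) :
    ((k : ℝ) + 1) * (k + 2) * legendreSolCoeff q (k + 2) =
      (k * (k + 1) - -(1 / 4)) * legendreSolCoeff q k := by
  have hrec := legendreCoeff_recurrence k
  have hpar : Even (k + 2) ↔ Even k := by simp [Nat.even_add]
  simp only [legendreSolCoeff, hpar]
  split_ifs
  · linear_combination hrec
  · linear_combination -q * hrec

lemma abs_legendreSolCoeff_le (hq : |q| ≤ 1) (k : ℕ) :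
    |legendreSolCoeff q k| ≤ legendreCoeff k := by
  have hpos := legendreCoeff_pos k
  rw [legendreSolCoeff]
  split_ifs
  · rw [abs_of_pos hpos]
  · rw [abs_neg, abs_mul, abs_of_pos hpos]
    exact mul_le_of_le_one_left hpos.le hq

lemma hasSum_legendreSol (hq : |q| ≤ 1) (hx : |x| < 1) :
    HasSum (fun k => legendreSolCoeff q k * x ^ k) (legendreSol q x) := by
  have hgeom := (summable_geometric_of_abs_lt_one hx).abs.mul_left (legendreCoeff 0)
  refine (Summable.of_norm_bounded hgeom fun k => ?_).hasSum
  rw [norm_eq_abs, abs_mul]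
  gcongr
  exact (abs_legendreSolCoeff_le hq k).trans (legendreCoeff_strictAnti.antitone k.zero_le)

lemma legendreSol_zero (q : ℝ) : legendreSol q 0 = legendreCoeff 0 := by
  rw [legendreSol, tsum_eq_single 0 fun k hk => by simp [hk]]
  simp [legendreSolCoeff]

lemma deriv_legendreSol_zero (hq : |q| ≤ 1) :
    deriv (legendreSol q) 0 = -(q * legendreCoeff 1) := by
  have hderiv := hasSum_deriv_of_hasSum_pow (R := 1) (x := (0 : ℝ))
    (fun _ => hasSum_legendreSol hq) (by simp)
  rw [← hderiv.tsum_eq, tsum_eq_single 0 fun k hk => by simp [hk]]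
  simp [legendreSolCoeff]

lemma legendreSol_pos (hq : |q| ≤ 1) (hx : |x| < 1) : 0 < legendreSol q x := by
  refine pos_of_hasSum_pow_of_abs_odd_lt_even (fun j => ?_) hx.le (hasSum_legendreSol hq hx)
  calc |legendreSolCoeff q (2 * j + 1)| ≤ legendreCoeff (2 * j + 1) := abs_legendreSolCoeff_le hq _
    _ < legendreCoeff (2 * j) := legendreCoeff_strictAnti (Nat.lt_succ_self _)
    _ = legendreSolCoeff q (2 * j) := by simp [legendreSolCoeff]

lemma hasDerivAt_legendreSol (hq : |q| ≤ 1) (hx : |x| < 1) :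
    HasDerivAt (legendreSol q) (deriv (legendreSol q) x) x :=
  (differentiableAt_of_hasSum_pow (R := 1) (fun _ => hasSum_legendreSol hq) hx).hasDerivAt

lemma hasDerivAt_deriv_legendreSol (hq : |q| ≤ 1) (hx : |x| < 1) :
    HasDerivAt (deriv (legendreSol q)) (deriv (deriv (legendreSol q)) x) x :=
  (differentiableAt_of_hasSum_pow (R := 1)
    (fun _ => hasSum_deriv_of_hasSum_pow fun _ => hasSum_legendreSol hq) hx).hasDerivAt

lemma legendreSol_ode (hq : |q| ≤ 1) (hx : |x| < 1) :
    (1 - x ^ 2) * deriv (deriv (legendreSol q)) x - 2 * x * deriv (legendreSol q) x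
      + -(1 / 4) * legendreSol q x = 0 :=
  legendre_ode_of_recurrence (R := 1) (fun _ => hasSum_legendreSol hq)
    (legendreSolCoeff_recurrence q) hx

lemma tendsto_rpow_mul_legendreSol {s : ℝ} (hs : 0 < s) (hq : |q| ≤ 1) :
    Tendsto (fun x => (1 - x) ^ s * legendreSol q x) (𝓝[<] 1) (𝓝 0) :=
  tendsto_rpow_mul_of_hasSum_pow_of_abs_coeff_le hs (fun _ => hasSum_legendreSol hq)
    fun k => (abs_legendreSolCoeff_le hq _).trans (legendreCoeff_succ_le k)

end LegendreSol

lemma abs_cos_lt_one_of_sin_pos {θ : ℝ} (hθ : 0 < sin θ) : |cos θ| < 1 := by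
  rw [← sq_lt_one_iff_abs_lt_one, cos_sq']
  linarith [pow_pos hθ 2]

lemma tendsto_cos_nhdsGT_zero : Tendsto cos (𝓝[>] 0) (𝓝[<] 1) := by
  refine tendsto_nhdsWithin_iff.2
    ⟨(continuous_cos.tendsto' 0 1 cos_zero).mono_left nhdsWithin_le_nhds, ?_⟩
  filter_upwards [Ioo_mem_nhdsGT pi_pos] with θ hθ
  exact (abs_lt.1 (abs_cos_lt_one_of_sin_pos (sin_pos_of_mem_Ioo hθ))).2

lemma sqrt_sin_eq_rpow {θ : ℝ} (hθ : 0 ≤ sin θ) :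
    √(sin θ) = (1 + cos θ) ^ (1 / 4 : ℝ) * (1 - cos θ) ^ (1 / 4 : ℝ) := by
  have hsq : (1 + cos θ) * (1 - cos θ) = sin θ ^ (2 : ℝ) := by
    rw [rpow_two, sin_sq]; ring
  rw [← mul_rpow (by linarith [neg_one_le_cos θ]) (by linarith [cos_le_one θ]), hsq,
    ← rpow_mul hθ, sqrt_eq_rpow]
  norm_num

section Liouville

/-- The Liouville transform `√(sin θ) · y (cos θ)`, which removes the first-order term from
Legendre's equation for `y` written in the angle variable. -/
noncomputable def liouville (y : ℝ → ℝ) (θ : ℝ) : ℝ := √(sin θ) * y (cos θ)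

/-- The derivative of `liouville y`, where `y'` stands for the derivative of `y`. -/
noncomputable def liouvilleDeriv (y y' : ℝ → ℝ) (θ : ℝ) : ℝ :=
  cos θ / (2 * √(sin θ)) * y (cos θ) - √(sin θ) * sin θ * y' (cos θ)

variable {y y' : ℝ → ℝ} {y'' l θ : ℝ}

lemma hasDerivAt_liouville (hθ : 0 < sin θ) (hy : HasDerivAt y (y' (cos θ)) (cos θ)) :
    HasDerivAt (liouville y) (liouvilleDeriv y y' θ) θ := by
  convert! ((hasDerivAt_sin θ).sqrt hθ.ne').mul (hy.comp θ (hasDerivAt_cos θ)) using 1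
  simp only [liouvilleDeriv, Function.comp_apply]
  ring

lemma hasDerivAt_liouvilleDeriv (hθ : 0 < sin θ) (hy : HasDerivAt y (y' (cos θ)) (cos θ))
    (hy' : HasDerivAt y' y'' (cos θ))
    (hode : (1 - cos θ ^ 2) * y'' - 2 * cos θ * y' (cos θ) + l * y (cos θ) = 0) :
    HasDerivAt (liouvilleDeriv y y')
      (-((1 / 4 / sin θ ^ 2 + (l + 1 / 4)) * liouville y θ)) θ := by
  have hsqrt := (hasDerivAt_sin θ).sqrt hθ.ne'
  have hycos := hy.comp θ (hasDerivAt_cos θ)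
  have hycos' := hy'.comp θ (hasDerivAt_cos θ)
  have hS : 0 < √(sin θ) := sqrt_pos.2 hθ
  have hsin : sin θ = √(sin θ) ^ 2 := (sq_sqrt hθ.le).symm
  have hcos : cos θ ^ 2 = 1 - √(sin θ) ^ 4 := by
    linear_combination sin_sq_add_cos_sq θ - (sin θ + √(sin θ) ^ 2) * hsin
  convert! (((hasDerivAt_cos θ).div (hsqrt.const_mul 2) (by positivity)).mul hycos).sub
    ((hsqrt.mul (hasDerivAt_sin θ)).mul hycos') using 1
  simp only [liouville, Function.comp_apply, Pi.mul_apply, Pi.div_apply]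
  generalize √(sin θ) = S at *
  rw [hsin]
  rw [hcos] at hode
  field_simp
  linear_combination -16 * S ^ 4 * hode + 4 * y (cos θ) * hcos

lemma tendsto_liouville_nhdsGT_zero
    (hy : Tendsto (fun x => (1 - x) ^ (1 / 4 : ℝ) * y x) (𝓝[<] 1) (𝓝 0)) :
    Tendsto (liouville y) (𝓝[>] 0) (𝓝 0) := by
  have hfactor : Tendsto (fun θ => (1 + cos θ) ^ (1 / 4 : ℝ)) (𝓝[>] 0) (𝓝 (2 ^ (1 / 4 : ℝ))) := by
    refine (Continuous.tendsto' ?_ 0 _ ?_).mono_left nhdsWithin_le_nhds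
    · fun_prop (disch := norm_num)
    · norm_num
  have hprod := hfactor.mul (hy.comp tendsto_cos_nhdsGT_zero)
  rw [mul_zero] at hprod
  refine hprod.congr' ?_
  filter_upwards [Ioo_mem_nhdsGT pi_pos] with θ hθ
  rw [liouville, sqrt_sin_eq_rpow (sin_pos_of_mem_Ioo hθ).le, mul_assoc, Function.comp_apply]

end Liouville

lemma hasDerivAt_const_mul_cos_mul_sub (κ ω b θ : ℝ) :
    HasDerivAt (fun t => κ * cos (ω * (b - t))) (ω * κ * sin (ω * (b - θ))) θ := by
  have hinner : HasDerivAt (fun t => ω * (b - t)) (ω * -1) θ :=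
    ((hasDerivAt_id θ).const_sub b).const_mul ω
  convert! hinner.cos.const_mul κ using 1
  ring

lemma hasDerivAt_const_mul_sin_mul_sub (κ ω b θ : ℝ) :
    HasDerivAt (fun t => κ * sin (ω * (b - t))) (-(ω * κ * cos (ω * (b - θ)))) θ := by
  have hinner : HasDerivAt (fun t => ω * (b - t)) (ω * -1) θ :=
    ((hasDerivAt_id θ).const_sub b).const_mul ω
  convert! hinner.sin.const_mul κ using 1
  ring

lemma cos_mul_half_sub_pos {β ω θ : ℝ} (hω : 0 ≤ ω) (hωβ : ω * (β / 2 - π / 2) < π / 2)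
    (hθ : θ ∈ Icc (π / 2) (β / 2)) : 0 < cos (ω * (β / 2 - θ)) := by
  have hnonneg : 0 ≤ ω * (β / 2 - θ) := mul_nonneg hω (sub_nonneg.2 hθ.2)
  have hle : ω * (β / 2 - θ) ≤ ω * (β / 2 - π / 2) := by gcongr; exact hθ.1
  exact cos_pos_of_mem_Ioo ⟨by linarith [pi_pos], hle.trans_lt hωβ⟩

theorem exists_isBVPSolution_of_left_solution {u u' : ℝ → ℝ} {β ω : ℝ} (hβ : π ≤ β) (hω : 0 ≤ ω)
    (hωβ : ω * (β / 2 - π / 2) < π / 2)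
    (hu : ∀ θ ∈ Ioc 0 (π / 2), HasDerivAt u (u' θ) θ)
    (hu' : ∀ θ ∈ Ioc 0 (π / 2), HasDerivAt u' (-(ω ^ 2 * (1 / sin θ ^ 2) * u θ)) θ)
    (hpos : ∀ θ ∈ Ioc 0 (π / 2), 0 < u θ) (hzero : Tendsto u (𝓝[>] 0) (𝓝 0))
    (hmatch : u' (π / 2) = ω * tan (ω * (β / 2 - π / 2)) * u (π / 2)) :
    ∃ ψ, IsBVPSolution β (ω ^ 2) ψ := by
  have hβ₂ : π / 2 ≤ β / 2 := by gcongr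
  have hcos := cos_mul_half_sub_pos hω hωβ ⟨le_rfl, hβ₂⟩
  set κ := u (π / 2) / cos (ω * (β / 2 - π / 2))
  have hκ : 0 < κ := div_pos (hpos _ ⟨half_pos pi_pos, le_rfl⟩) hcos
  set g : ℝ → ℝ := fun θ => κ * cos (ω * (β / 2 - θ))
  set g' : ℝ → ℝ := fun θ => ω * κ * sin (ω * (β / 2 - θ))
  have hg : u (π / 2) = g (π / 2) := (div_mul_cancel₀ _ hcos.ne').symm
  have hg' : u' (π / 2) = g' (π / 2) := by
    simp only [hmatch, g', κ, tan_eq_sin_div_cos]; ring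
  refine ⟨fun θ => if θ < π / 2 then u θ else g θ, fun θ => if θ < π / 2 then u' θ else g' θ,
    fun θ hθ => ?deriv, fun θ hθ => ?deriv2, fun θ hθ => ?pos, ?zero, ?neumann⟩
  case deriv =>
    exact (hasDerivAt_ite_lt hg hg' (fun h => hu θ ⟨hθ.1, h⟩)
      fun _ => hasDerivAt_const_mul_cos_mul_sub κ ω (β / 2) θ).hasDerivWithinAt
  case deriv2 =>
    have hglue := hasDerivAt_ite_lt (f' := fun θ => -(ω ^ 2 * (1 / sin θ ^ 2) * u θ))
      (g' := fun θ => -(ω * (ω * κ) * cos (ω * (β / 2 - θ)))) hg'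
      (by simp only [sin_pi_div_two, hg, g]; ring) (fun h => hu' θ ⟨hθ.1, h⟩)
      fun _ => hasDerivAt_const_mul_sin_mul_sub (ω * κ) ω (β / 2) θ
    convert! hglue.hasDerivWithinAt using 1
    dsimp only
    split_ifs with h
    · rw [Vpot_of_lt_pi_div_two h]
    · rw [Vpot_of_pi_div_two_le (not_lt.1 h) (by linarith [hθ.2])]
      ring
  case pos =>
    dsimp only
    split_ifs with h
    · exact hpos θ ⟨hθ.1, h.le⟩
    · exact mul_pos hκ (cos_mul_half_sub_pos hω hωβ ⟨not_lt.1 h, hθ.2⟩)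
  case zero =>
    refine hzero.congr' ?_
    filter_upwards [Ioo_mem_nhdsGT (half_pos pi_pos)] with θ hθ using (if_pos hθ.2).symm
  case neumann => simp [g', hβ₂.not_gt]

theorem exists_isBVPSolution_one_quarter {β : ℝ} (hβ : π ≤ β) (hβ' : β < 3 * π)
    (htan : tan ((β - π) / 4) ≤ 4 * (Gamma (3 / 4) / Gamma (1 / 4)) ^ 2) :
    ∃ ψ, IsBVPSolution β (1 / 4) ψ := by
  have ha₀ := legendreCoeff_pos 0
  have ha₁ := legendreCoeff_pos 1
  set q := tan ((β - π) / 4) * legendreCoeff 0 / (2 * legendreCoeff 1)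
  have htan₀ : 0 ≤ tan ((β - π) / 4) :=
    tan_nonneg_of_nonneg_of_le_pi_div_two (by linarith) (by linarith)
  have hq : |q| ≤ 1 := by
    rw [abs_of_nonneg (by positivity), div_le_one (by positivity), legendreCoeff_one]
    linarith [mul_le_mul_of_nonneg_right htan ha₀.le]
  have hsin : ∀ θ ∈ Ioc 0 (π / 2), 0 < sin θ := fun θ hθ =>
    sin_pos_of_pos_of_lt_pi hθ.1 (by linarith [hθ.2, pi_pos])
  have hcos (θ) (hθ : θ ∈ Ioc 0 (π / 2)) := abs_cos_lt_one_of_sin_pos (hsin θ hθ)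
  have hquarter : (1 / 4 : ℝ) = (1 / 2) ^ 2 := by norm_num
  rw [hquarter]
  refine exists_isBVPSolution_of_left_solution (u := liouville (legendreSol q))
    (u' := liouvilleDeriv (legendreSol q) (deriv (legendreSol q))) hβ one_half_pos.le (by linarith)
    (fun θ hθ => hasDerivAt_liouville (hsin θ hθ) (hasDerivAt_legendreSol hq (hcos θ hθ)))
    (fun θ hθ => ?_)
    (fun θ hθ => mul_pos (sqrt_pos.2 (hsin θ hθ)) (legendreSol_pos hq (hcos θ hθ)))
    (tendsto_liouville_nhdsGT_zero (tendsto_rpow_mul_legendreSol (by norm_num) hq)) ?_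
  · convert! hasDerivAt_liouvilleDeriv (hsin θ hθ) (hasDerivAt_legendreSol hq (hcos θ hθ))
      (hasDerivAt_deriv_legendreSol hq (hcos θ hθ)) (legendreSol_ode hq (hcos θ hθ)) using 1
    ring
  · have hα : 1 / 2 * (β / 2 - π / 2) = (β - π) / 4 := by ring
    simp only [liouville, liouvilleDeriv, sin_pi_div_two, cos_pi_div_two, sqrt_one,
      legendreSol_zero, deriv_legendreSol_zero hq, hα, q]
    field_simp
    ring

/-- For `β ∈ (π, βcr]`, the largest `c > 0` for which the boundary value problem
`−ψ'' = c·V·ψ`, `ψ(0+) = 0`, `ψ'(β/2) = 0` admits a positive solution is `c = 1/4`. -/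
theorem bvp_largest_constant_small_beta
    (β βcr : ℝ) (hβcr : isBetaCr βcr) (hβ1 : Real.pi < β) (hβ2 : β ≤ βcr) :
    IsGreatest {c : ℝ | 0 < c ∧ ∃ ψ : ℝ → ℝ, IsBVPSolution β c ψ} (1 / 4) := by
  obtain ⟨⟨-, hβcr_lt⟩, hβcr_tan⟩ := hβcr
  have htan : tan ((β - π) / 4) ≤ tan ((βcr - π) / 4) :=
    strictMonoOn_tan.monotoneOn ⟨by linarith, by linarith⟩ ⟨by linarith, by linarith⟩ (by linarith)
  refine ⟨⟨by norm_num, ?_⟩, fun c hc => ?_⟩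
  · exact exists_isBVPSolution_one_quarter hβ1.le (by linarith) (htan.trans_eq hβcr_tan)
  · obtain ⟨-, ψ, hψ⟩ := hc
    exact le_one_quarter_of_isBVPSolution (pi_pos.trans hβ1) hψ
end
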